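/- arXiv:2211.10781 — 4 statements merged into one kernel-verified Lean document; each statement's English description precedes it below -/
import Mathlib

section
/- Let Φ be a commutative ring with 1 and let A be a finitely generated commutative Φ-algebra whose underlying additive group has no torsion. Then every finitely generated subgroup of the group Aut_Φ(A) of Φ-algebra automorphisms of A is virtually torsion free, i.e. has a torsion-free subgroup of finite index. -/
/-!
The algebra `A` contains a finitely generated subring `B` that is stable under `G` and on which `G`
acts faithfully: adjoin to `ℤ` a finite set of `Φ`-generators of `A` together with the finitely many
coefficients in `Φ` needed to express their images under the generators of `G` and their inverses
(`exists_invariant_subring`). So it suffices to treat a group acting faithfully on a finitely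
generated commutative ring `B` without additive torsion.

For an ideal `I` of finite index in `B`, let `H_I` be the subgroup of elements acting trivially
on `B ⧸ I ^ 2`; it has finite index. If `h ∈ H_I` has order `p` and `p` is invertible modulo `I`,
then `h - 1` maps `B` into every power of `I`, because `h` is unipotent for the `I`-adic filtration
(`sub_mem_pow`). When every element of `1 + I` is a non-zero-divisor, Krull's intersection theorem
gives `⋂ I ^ k = 0`, hence `h = 1`.

Such ideals exist with any prescribed `N ≥ 1` invertible modulo `I` (`exists_good_ideal`): an
associated prime `P` of `B` does not contain `N` because `B` has no torsion, so, `B` being a Jacobson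
ring, some maximal ideal contains `P` but not `N`; its residue field is finite. Intersect these
maximal ideals over the finitely many associated primes. Choosing `I₁` with `N = 1` and then `I₂`
with `N = |B ⧸ I₁|`, every prime is invertible modulo `I₁` or modulo `I₂`, so `H_{I₁} ∩ H_{I₂}` has no
element of prime order.
-/

/-! ### Ideals of finite index in finitely generated rings -/

/-- A field that is finitely generated as an abelian group is finite: in characteristic zero `ℤ`
would itself be a field, by integrality. -/
theorem finite_of_field_of_moduleFinite_int (K : Type*) [Field K] [Module.Finite ℤ K] :
    Finite K := by
  obtain ⟨n, hn0, hn⟩ : ∃ n : ℤ, n ≠ 0 ∧ (n : K) = 0 := by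
    by_contra! h
    have hinj : Function.Injective (algebraMap ℤ K) := by
      rw [injective_iff_map_eq_zero]
      intro a ha
      by_contra h0
      exact h a h0 (by simpa using ha)
    exact Int.not_isField
      ((Algebra.IsIntegral.isField_iff_isField (R := ℤ) (S := K) hinj).mpr (Field.toIsField K))
  refine Module.finite_of_fg_torsion K ?_
  intro x
  refine ⟨⟨n, mem_nonZeroDivisors_of_ne_zero hn0⟩, ?_⟩
  change n • x = 0
  rw [zsmul_eq_mul, hn, zero_mul]

theorem isJacobsonRing_int : IsJacobsonRing ℤ := by
  rw [isJacobsonRing_iff_prime_eq]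
  intro P hP
  by_cases hbot : P = ⊥
  · subst hbot
    refine Ideal.eq_jacobson_iff_notMem.mpr fun x hx => ?_
    -- A prime larger than `|x|` does not divide `x`.
    obtain ⟨p, hle, hp⟩ := Nat.exists_infinite_primes (x.natAbs + 1)
    have hpZ : Prime (p : ℤ) := Nat.prime_iff_prime_int.mp hp
    refine ⟨Ideal.span {(p : ℤ)}, ⟨bot_le,
      PrincipalIdealRing.isMaximal_of_irreducible hpZ.irreducible⟩, fun hmem => ?_⟩
    have hdvd := Int.natCast_dvd.mp (Ideal.mem_span_singleton.mp hmem)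
    have := Nat.le_of_dvd (Int.natAbs_pos.mpr hx) hdvd
    omega
  · have := hP.isMaximal hbot
    exact Ideal.jacobson_eq_self_of_isMaximal

/-- The ideal `I` is an intersection of maximal ideals avoiding `N`, one above each associated
prime of `B`; the last condition says that the elements of `1 - I` are non-zero-divisors. -/
theorem exists_good_ideal (B : Type*) [CommRing B] [Algebra.FiniteType ℤ B]
    (htf : ∀ (a : B) (n : ℕ), 1 ≤ n → n • a = 0 → a = 0) (N : ℕ) (hN : 1 ≤ N) :
    ∃ I : Ideal B, Finite (B ⧸ I) ∧ (∃ y : B, (N : B) * y - 1 ∈ I) ∧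
      ∀ r ∈ I, ∀ x : B, r * x = x → x = 0 := by
  have : IsNoetherianRing B := Algebra.FiniteType.isNoetherianRing ℤ B
  have := isJacobsonRing_int
  have : IsJacobsonRing B := isJacobsonRing_of_finiteType (A := ℤ)
  have key : ∀ P ∈ associatedPrimes B B, ∃ M : Ideal B, (P ≤ M ∧ M.IsMaximal) ∧ (N : B) ∉ M := by
    intro P hP
    have hPp : P.IsPrime := hP.isPrime
    refine Ideal.eq_jacobson_iff_notMem.mp (IsJacobsonRing.out inferInstance hPp.isRadical) _ ?_
    intro hmem
    obtain ⟨-, x, rfl⟩ := isAssociatedPrime_iff.mp hP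
    rw [Submodule.mem_colon_singleton, Submodule.mem_bot, smul_eq_mul, ← nsmul_eq_mul] at hmem
    have hx := htf x N hN hmem
    subst hx
    exact hPp.ne_top (by simp)
  choose! M hM hNM using key
  have hfin := associatedPrimes.finite B B
  have : Finite (associatedPrimes B B) := hfin
  refine ⟨⨅ P ∈ hfin.toFinset, M P, ?_, ?_, ?_⟩
  · have hF : ∀ P : associatedPrimes B B, Finite (B ⧸ M P) := by
      rintro ⟨P, hP⟩
      have := (hM P hP).2
      let _ : Field (B ⧸ M P) := Ideal.Quotient.field _
      have : Algebra.FiniteType ℤ (B ⧸ M P) :=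
        Algebra.FiniteType.of_surjective (Ideal.Quotient.mkₐ ℤ (M P))
          (Ideal.Quotient.mkₐ_surjective ℤ (M P))
      have := finite_of_finite_type_of_isJacobsonRing ℤ (B ⧸ M P)
      exact finite_of_field_of_moduleFinite_int _
    have hker : (⨅ P ∈ hfin.toFinset, M P) =
        RingHom.ker (RingHom.pi fun P : associatedPrimes B B => Ideal.Quotient.mk (M P)) := by
      ext x
      simp [RingHom.mem_ker, funext_iff, Ideal.Quotient.eq_zero_iff_mem, Submodule.mem_iInf]
    rw [hker]
    exact Finite.of_injective _ (RingHom.kerLift_injective _)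
  · have h : Ideal.span {(N : B)} ⊔ (⨅ P ∈ hfin.toFinset, M P) = ⊤ := by
      refine Ideal.sup_iInf_eq_top fun P hP => ?_
      have hP' := hfin.mem_toFinset.mp hP
      rw [sup_comm]
      refine (hM P hP').2.1.2 _ (left_lt_sup.mpr fun hle => hNM P hP' ?_)
      exact hle (Ideal.mem_span_singleton_self _)
    have h1 := (Ideal.eq_top_iff_one _).mp h
    obtain ⟨a, ha, b, hb, hab⟩ := Submodule.mem_sup.mp h1
    obtain ⟨y, rfl⟩ := Ideal.mem_span_singleton'.mp ha
    refine ⟨y, ?_⟩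
    have : (N : B) * y - 1 = -b := by rw [← hab]; ring
    rw [this]
    exact neg_mem hb
  · intro r hr x hx
    by_contra hx0
    obtain ⟨P, hP, hle⟩ := exists_le_isAssociatedPrime_of_isNoetherianRing B x hx0
    have hmem : 1 - r ∈ P := by
      apply hle
      rw [Submodule.mem_colon_singleton, Submodule.mem_bot, smul_eq_mul, sub_mul, hx, one_mul,
        sub_self]
    have hrM : r ∈ M P := by
      have h := Ideal.mem_iInf.mp hr P
      exact Ideal.mem_iInf.mp h (hfin.mem_toFinset.mpr hP)
    have h1 := add_mem ((hM P hP).1 hmem) hrM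
    rw [sub_add_cancel] at h1
    exact (hM P hP).2.ne_top ((Ideal.eq_top_iff_one _).mpr h1)

/-! ### Unipotence of congruence subgroups -/

/-- A ring endomorphism acting trivially modulo `I ^ 2` acts trivially on each `I ^ k / I ^ (k + 1)`. -/
theorem sub_mem_pow_succ_of_mem_pow {B : Type*} [CommRing B] (I : Ideal B) (f : B →+* B)
    (hf : ∀ x, f x - x ∈ I ^ 2) (k : ℕ) : ∀ x ∈ I ^ k, f x - x ∈ I ^ (k + 1) := by
  have hfI : ∀ x ∈ I, f x ∈ I := fun x hx => by
    have := add_mem (Ideal.pow_le_self two_ne_zero (hf x)) hx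
    rwa [sub_add_cancel] at this
  induction k with
  | zero => exact fun x _ => by simpa using Ideal.pow_le_self two_ne_zero (hf x)
  | succ k ih =>
    intro x hx
    rw [pow_succ] at hx
    refine Submodule.mul_induction_on hx (fun a ha b hb => ?_) fun a b ha hb => ?_
    · have h1 : f (a * b) - a * b = (f a - a) * f b + a * (f b - b) := by rw [map_mul]; ring
      rw [h1]
      refine add_mem ?_ ?_
      · rw [pow_succ]
        exact Ideal.mul_mem_mul (ih a ha) (hfI b hb)
      · have := Ideal.mul_mem_mul ha (hf b)
        rwa [← pow_add] at this
    · have h1 : f (a + b) - (a + b) = (f a - a) + (f b - b) := by rw [map_add]; ring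
      rw [h1]
      exact add_mem ha hb

/-- Modulo `I ^ (k + 1)`, the relation `f ^ p = 1` becomes `p (f - 1) = 0` once `f - 1` has image in
`I ^ k`; since `p` is invertible modulo `I`, the image of `f - 1` then lies in `I ^ (k + 1)`. -/
theorem sub_mem_pow {B : Type*} [CommRing B] (I : Ideal B) (f : B →+* B)
    (hf : ∀ x, f x - x ∈ I ^ 2) (p : ℕ) (hp : f ^ p = 1) (hpI : ∃ y : B, (p : B) * y - 1 ∈ I)
    (k : ℕ) : ∀ x, f x - x ∈ I ^ k := by
  induction k with
  | zero => simp
  | succ k ih =>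
    intro x
    have hd := sub_mem_pow_succ_of_mem_pow I f hf k
    have hpow : ∀ n : ℕ, ∀ z ∈ I ^ k, (f ^ n) z - z ∈ I ^ (k + 1) := by
      intro n
      induction n with
      | zero => simp
      | succ n ihn =>
        intro z hz
        have hfz : (f ^ n) z ∈ I ^ k := by
          have := add_mem (Ideal.pow_le_pow_right (Nat.le_succ k) (ihn z hz)) hz
          rwa [sub_add_cancel] at this
        have h1 : (f ^ (n + 1)) z - z = (f ((f ^ n) z) - (f ^ n) z) + ((f ^ n) z - z) := by
          rw [pow_succ']
          simp
        rw [h1]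
        exact add_mem (hd _ hfz) (ihn z hz)
    -- Telescoping `f ^ n - 1 = ∑ f ^ i (f - 1)`, where each `f ^ i` is trivial on `I ^ k / I ^ (k + 1)`.
    have hsum : ∀ n : ℕ, ((f ^ n) x - x) - n * (f x - x) ∈ I ^ (k + 1) := by
      intro n
      induction n with
      | zero => simp
      | succ n ihn =>
        have h1 : ((f ^ (n + 1)) x - x) - ((n + 1 : ℕ) : B) * (f x - x) =
            (((f ^ n) x - x) - n * (f x - x)) + ((f ^ n) (f x - x) - (f x - x)) := by
          rw [pow_succ, map_sub]
          simp only [RingHom.mul_def, RingHom.comp_apply]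
          push_cast
          ring
        rw [h1]
        exact add_mem ihn (hpow n _ (ih x))
    have h2 := hsum p
    rw [hp] at h2
    obtain ⟨y, hy⟩ := hpI
    have h3 := Ideal.mul_mem_mul hy (ih x)
    rw [← pow_succ'] at h3
    have h4 : f x - x =
        -(y * (((1 : B →+* B) x - x) - p * (f x - x))) - ((p : B) * y - 1) * (f x - x) := by
      simp only [RingHom.one_def, RingHom.id_apply]
      ring
    rw [h4]
    exact sub_mem (neg_mem (Ideal.mul_mem_left _ _ h2)) h3

/-- The subgroup of elements acting trivially modulo the ideal `J`, which need not be invariant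
under the group. -/
def congruenceSubgroup {B G : Type*} [CommRing B] [Group G] (ρ : G →* (B →+* B)) (J : Ideal B) :
    Subgroup G where
  carrier := {g | ∀ x, ρ g x - x ∈ J}
  one_mem' := by simp
  mul_mem' := by
    intro a b ha hb x
    have h : ρ (a * b) x - x = (ρ a (ρ b x) - ρ b x) + (ρ b x - x) := by simp
    rw [h]
    exact add_mem (ha _) (hb _)
  inv_mem' := by
    intro a ha x
    have h1 : ρ a (ρ a⁻¹ x) = x := by
      rw [← RingHom.comp_apply, ← RingHom.mul_def, ← map_mul]
      simp
    have h2 := neg_mem (ha (ρ a⁻¹ x))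
    rwa [h1, neg_sub] at h2

/-- Left cosets are separated by the homomorphisms `B → B ⧸ J` induced by `g⁻¹`; there are finitely
many of these, since they are determined by the images of finitely many generators. -/
theorem congruenceSubgroup_index_ne_zero {B G : Type*} [CommRing B] [Algebra.FiniteType ℤ B]
    [Group G] (ρ : G →* (B →+* B)) (J : Ideal B) [Finite (B ⧸ J)] :
    (congruenceSubgroup ρ J).index ≠ 0 := by
  obtain ⟨s, hs⟩ := (inferInstance : Algebra.FiniteType ℤ B).1
  let F : G ⧸ congruenceSubgroup ρ J → (s → B ⧸ J) :=
    fun q a => Ideal.Quotient.mk J (ρ q.out⁻¹ a)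
  have hF : Function.Injective F := by
    intro q q' h
    have hext : ∀ z : B, Ideal.Quotient.mk J (ρ q.out⁻¹ z) = Ideal.Quotient.mk J (ρ q'.out⁻¹ z) := by
      have heq : ((Ideal.Quotient.mk J).comp (ρ q.out⁻¹)).toIntAlgHom =
          ((Ideal.Quotient.mk J).comp (ρ q'.out⁻¹)).toIntAlgHom :=
        AlgHom.ext_of_adjoin_eq_top hs fun a ha => congrFun h ⟨a, ha⟩
      exact fun z => DFunLike.congr_fun heq z
    rw [← q.out_eq', ← q'.out_eq']
    refine QuotientGroup.eq.mpr fun x => ?_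
    have h1 := Ideal.Quotient.eq.mp (hext (ρ q'.out x))
    have h2 : ρ q'.out⁻¹ (ρ q'.out x) = x := by
      rw [← RingHom.comp_apply, ← RingHom.mul_def, ← map_mul]
      simp
    rw [h2] at h1
    simpa using h1
  have := Finite.of_injective F hF
  exact Subgroup.index_ne_zero_of_finite

/-- If `p` is invertible modulo `I`, an element of the congruence subgroup of `I ^ 2` killed by `p` is
trivial, by Krull's intersection theorem. -/
theorem eq_one_of_pow_eq_one {B G : Type*} [CommRing B] [IsNoetherianRing B] [Group G]
    (ρ : G →* (B →+* B)) (hρ : Function.Injective ρ) (I : Ideal B)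
    (hI : ∀ r ∈ I, ∀ x : B, r * x = x → x = 0) (g : G) (hg : g ∈ congruenceSubgroup ρ (I ^ 2))
    (p : ℕ) (hp : g ^ p = 1) (hpI : ∃ y : B, (p : B) * y - 1 ∈ I) : g = 1 := by
  apply hρ
  rw [map_one]
  ext x
  have h := sub_mem_pow I (ρ g) hg p (by rw [← map_pow, hp, map_one]) hpI
  have hmem : ρ g x - x ∈ (⨅ i : ℕ, I ^ i • ⊤ : Ideal B) := by
    simpa [Submodule.mem_iInf] using fun k => h k x
  obtain ⟨r, hr⟩ := (I.mem_iInf_smul_pow_eq_bot_iff _).mp hmem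
  simpa [sub_eq_zero] using hI r r.2 _ hr

theorem virtually_torsionFree_of_faithful {B G : Type*} [CommRing B] [Algebra.FiniteType ℤ B]
    [Group G] (htf : ∀ (a : B) (n : ℕ), 1 ≤ n → n • a = 0 → a = 0)
    (ρ : G →* (B →+* B)) (hρ : Function.Injective ρ) :
    ∃ H : Subgroup G, H.index ≠ 0 ∧ ∀ h ∈ H, IsOfFinOrder h → h = 1 := by
  have : IsNoetherianRing B := Algebra.FiniteType.isNoetherianRing ℤ B
  obtain ⟨I₁, hfin₁, -, hI₁⟩ := exists_good_ideal B htf 1 le_rfl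
  have hm : (Nat.card (B ⧸ I₁) : B) ∈ I₁ := by
    rw [← Ideal.Quotient.eq_zero_iff_mem, map_natCast, ← nsmul_one]
    exact card_nsmul_eq_zero'
  obtain ⟨I₂, hfin₂, ⟨y, hy⟩, hI₂⟩ := exists_good_ideal B htf (Nat.card (B ⧸ I₁)) Nat.card_pos
  have hq₁ : Finite (B ⧸ I₁ ^ 2) := Ideal.finite_quotient_pow (IsNoetherian.noetherian I₁) 2
  have hq₂ : Finite (B ⧸ I₂ ^ 2) := Ideal.finite_quotient_pow (IsNoetherian.noetherian I₂) 2
  refine ⟨congruenceSubgroup ρ (I₁ ^ 2) ⊓ congruenceSubgroup ρ (I₂ ^ 2),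
    Subgroup.index_inf_ne_zero (congruenceSubgroup_index_ne_zero _ _)
      (congruenceSubgroup_index_ne_zero _ _), ?_⟩
  intro h hh hfo
  by_contra hne
  obtain ⟨p, hp, hpd⟩ := Nat.exists_prime_and_dvd (mt orderOf_eq_one_iff.mp hne)
  obtain ⟨c, hc⟩ := hpd
  have hpos := hfo.orderOf_pos
  have hc0 : 0 < c := Nat.pos_of_ne_zero fun h0 => by
    rw [h0, mul_zero] at hc
    omega
  -- `h ^ c` has order `p`.
  have hgp : (h ^ c) ^ p = 1 := by rw [← pow_mul, mul_comm, ← hc, pow_orderOf_eq_one]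
  have hgne : h ^ c ≠ 1 := by
    refine pow_ne_one_of_lt_orderOf hc0.ne' ?_
    rw [hc]
    exact (Nat.lt_mul_iff_one_lt_left hc0).mpr hp.one_lt
  have hgH := pow_mem hh c
  apply hgne
  by_cases hdvd : p ∣ Nat.card (B ⧸ I₁)
  · obtain ⟨d, hd⟩ := hdvd
    refine eq_one_of_pow_eq_one ρ hρ I₂ hI₂ _ hgH.2 p hgp ⟨d * y, ?_⟩
    rw [hd] at hy
    push_cast at hy
    rwa [mul_assoc] at hy
  · refine eq_one_of_pow_eq_one ρ hρ I₁ hI₁ _ hgH.1 p hgp ?_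
    have hcop : IsCoprime (p : ℤ) (Nat.card (B ⧸ I₁) : ℤ) :=
      Nat.isCoprime_iff_coprime.mpr ((Nat.Prime.coprime_iff_not_dvd hp).mpr hdvd)
    obtain ⟨u, v, huv⟩ := hcop
    have huvB := congrArg (Int.cast : ℤ → B) huv
    push_cast at huvB
    refine ⟨u, ?_⟩
    have h1 : (p : B) * u - 1 = -(v * (Nat.card (B ⧸ I₁) : B)) := by rw [← huvB]; ring
    rw [h1]
    exact neg_mem (Ideal.mul_mem_left _ _ hm)

/-! ### Descent to a finitely generated subring -/

/-- An element of `Φ[s]` involves only finitely many coefficients from `Φ`. -/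
theorem exists_finite_coeffs {Φ A : Type*} [CommRing Φ] [CommRing A] [Algebra Φ A] (s : Set A)
    {a : A} (ha : a ∈ Algebra.adjoin Φ s) :
    ∃ T : Set Φ, T.Finite ∧ a ∈ Algebra.adjoin ℤ (algebraMap Φ A '' T ∪ s) := by
  induction ha using Algebra.adjoin_induction with
  | mem x hx => exact ⟨∅, Set.finite_empty, Algebra.subset_adjoin (Or.inr hx)⟩
  | algebraMap r =>
    exact ⟨{r}, Set.finite_singleton r, Algebra.subset_adjoin (Or.inl ⟨r, rfl, rfl⟩)⟩
  | add x y _ _ hx hy =>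
    obtain ⟨T, hT, hx⟩ := hx
    obtain ⟨U, hU, hy⟩ := hy
    refine ⟨T ∪ U, hT.union hU, add_mem ?_ ?_⟩
    · exact Algebra.adjoin_mono (Set.union_subset_union_left _
        (Set.image_mono Set.subset_union_left)) hx
    · exact Algebra.adjoin_mono (Set.union_subset_union_left _
        (Set.image_mono Set.subset_union_right)) hy
  | mul x y _ _ hx hy =>
    obtain ⟨T, hT, hx⟩ := hx
    obtain ⟨U, hU, hy⟩ := hy
    refine ⟨T ∪ U, hT.union hU, mul_mem ?_ ?_⟩
    · exact Algebra.adjoin_mono (Set.union_subset_union_left _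
        (Set.image_mono Set.subset_union_left)) hx
    · exact Algebra.adjoin_mono (Set.union_subset_union_left _
        (Set.image_mono Set.subset_union_right)) hy

theorem exists_invariant_subring {Φ A : Type*} [CommRing Φ] [CommRing A] [Algebra Φ A]
    (hfg : Algebra.FiniteType Φ A) (G : Subgroup (A ≃ₐ[Φ] A)) (hG : G.FG) :
    ∃ B : Subalgebra ℤ A, B.FG ∧ Algebra.adjoin Φ (B : Set A) = ⊤ ∧
      ∀ g ∈ G, ∀ x ∈ B, g x ∈ B := by
  obtain ⟨s, hs⟩ := hfg.1
  obtain ⟨S, rfl⟩ := hG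
  have hT : ∀ (g : A ≃ₐ[Φ] A) (x : A), ∃ T : Set Φ, T.Finite ∧
      g x ∈ Algebra.adjoin ℤ (algebraMap Φ A '' T ∪ (s : Set A)) :=
    fun g x => exists_finite_coeffs _ (by rw [hs]; trivial)
  choose T hTfin hT using hT
  let U : Set Φ := ⋃ g ∈ S, ⋃ x ∈ s, (T g x ∪ T g⁻¹ x)
  have hUfin : U.Finite := S.finite_toSet.biUnion fun g _ =>
    s.finite_toSet.biUnion fun x _ => (hTfin g x).union (hTfin g⁻¹ x)
  let B : Subalgebra ℤ A := Algebra.adjoin ℤ (algebraMap Φ A '' U ∪ (s : Set A))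
  have hstab : ∀ g : A ≃ₐ[Φ] A, (∀ x ∈ s, T g x ⊆ U) → ∀ x ∈ B, g x ∈ B := by
    intro g hg x hx
    have hle : B ≤ B.comap (g : A →+* A).toIntAlgHom := by
      refine Algebra.adjoin_le ?_
      rintro z (⟨r, hr, rfl⟩ | hz)
      · change g (algebraMap Φ A r) ∈ B
        rw [g.commutes]
        exact Algebra.subset_adjoin (Or.inl ⟨r, hr, rfl⟩)
      · change g z ∈ B
        exact Algebra.adjoin_mono (Set.union_subset_union_left _ (Set.image_mono (hg z hz))) (hT g z)
    exact hle hx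
  refine ⟨B, ?_, ?_, ?_⟩
  · exact Subalgebra.fg_def.mpr ⟨_, (hUfin.image _).union s.finite_toSet, rfl⟩
  · rw [eq_top_iff, ← hs]
    exact Algebra.adjoin_mono fun x hx => Algebra.subset_adjoin (Or.inr hx)
  · intro g hg
    induction hg using Subgroup.closure_induction'' with
    | mem g hg =>
      refine hstab g fun x hx r hr => ?_
      exact Set.mem_biUnion hg (Set.mem_biUnion hx (Or.inl hr))
    | inv_mem g hg =>
      refine hstab g⁻¹ fun x hx r hr => ?_
      exact Set.mem_biUnion hg (Set.mem_biUnion hx (Or.inr hr))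
    | one => exact fun x hx => hx
    | mul a b _ _ ha hb => exact fun x hx => ha _ (hb x hx)

/-- Theorem 1(a): For a finitely generated commutative `Φ`-algebra `A` without additive
torsion, every finitely generated subgroup of `Aut_Φ(A)` is virtually torsion free. -/
theorem stmt_0 (Φ A : Type*) [CommRing Φ] [CommRing A] [Algebra Φ A]
    (hfg : Algebra.FiniteType Φ A)
    (htf : ∀ (a : A) (n : ℕ), 1 ≤ n → n • a = 0 → a = 0)
    (G : Subgroup (A ≃ₐ[Φ] A)) (hG : G.FG) :
    ∃ H : Subgroup G, H.index ≠ 0 ∧ ∀ h ∈ H, IsOfFinOrder h → h = 1 := by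
  obtain ⟨B, hBfg, hBtop, hB⟩ := exists_invariant_subring hfg G hG
  have : Algebra.FiniteType ℤ B := B.fg_iff_finiteType.mp hBfg
  let ρ : G →* (B →+* B) :=
    { toFun := fun g => ((g : A ≃ₐ[Φ] A) : A →+* A).restrict B B (hB g g.2)
      map_one' := rfl
      map_mul' := fun _ _ => rfl }
  refine virtually_torsionFree_of_faithful (B := B) ?_ ρ ?_
  · intro a n hn h
    exact Subtype.ext (htf a n hn (by simpa using congrArg Subtype.val h))
  · intro g g' h
    -- Two `Φ`-automorphisms agreeing on `B` agree on the `Φ`-algebra it generates.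
    have heq : ((g : A ≃ₐ[Φ] A) : A →ₐ[Φ] A) = ((g' : A ≃ₐ[Φ] A) : A →ₐ[Φ] A) :=
      AlgHom.ext_of_adjoin_eq_top hBtop fun x hx =>
        congrArg Subtype.val (DFunLike.congr_fun h (⟨x, hx⟩ : B))
    exact Subtype.ext (AlgEquiv.ext fun x => DFunLike.congr_fun heq x)
end

section
/- Let m ≥ 2 and let A = ℤ⟨x₁,…,x_m⟩ be the free associative ring on free generators x₁,…,x_m (the free associative ℤ-algebra on m generators). Then the group Aut(A) of ring automorphisms of A is virtually torsion free. -/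
/-!
Write `A = ℤ⟨x₁,…,x_m⟩` and, for an integer `p ≥ 2`, let `M` be the two-sided ideal
`(p, x₁, …, x_m)`. Let `H p` be the group of automorphisms `g` that fix the homomorphism
`x_i ↦ ε_i` from `A` to the finite ring `ℤ/p² ⊕ ⨁ (ℤ/p²) ε_i` with `ε_i ε_j = 0`
(`congrSubgroup`). There are only finitely many ring homomorphisms from `A` to this ring, so `H p`
has finite index (`congrSubgroup_index_ne_zero`). The kernel of the homomorphism lies in `M²`, so
every `g ∈ H p` satisfies `(g - 1) A ⊆ M²`, whence `(g - 1) Mᵏ ⊆ Mᵏ⁺¹` for all `k`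
(`sub_mem_augIdeal_pow`).

If moreover `gⁿ = 1` with `n` coprime to `p`, then `g = 1` (`eq_one_of_pow_eq_one`). Indeed, if
`(g - 1) A ⊆ Mᵏ` and `b = g a - a`, then `0 = gⁿ a - a ≡ n b` modulo `Mᵏ⁺¹`, and `p b ∈ Mᵏ⁺¹`, so
`b ∈ Mᵏ⁺¹`; hence `(g - 1) A` lies in `⋂ Mᵏ`, which is zero (`eq_zero_of_forall_mem_augIdeal_pow`)
because the substitution `x_i ↦ p x_i` is injective and maps `Mᵏ` into `pᵏ A`.

An element of prime order `ℓ` in `H 2 ⊓ H 3` would contradict this for one of `p = 2`, `p = 3`, as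
`ℓ` is coprime to `2` or to `3`. So `H 2 ⊓ H 3` is torsion free.
-/

namespace FreeRingAut

variable {m : ℕ}

-- The free `ℤ`-algebra carries two `ℤ`-actions, equal but not by reducible unfolding: its algebra
-- structure and the integer multiples of an additive group. The first is used throughout.
local instance (priority := 5000) instSMulInt : SMul ℤ (FreeAlgebra ℤ (Fin m)) := Algebra.toSMul

local instance (priority := 5000) instModuleInt : Module ℤ (FreeAlgebra ℤ (Fin m)) :=
  Algebra.toModule

local instance (priority := 5000) instDistribMulActionInt :
    DistribMulAction ℤ (FreeAlgebra ℤ (Fin m)) := Module.toDistribMulAction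

local instance (priority := 5000) instMulActionInt : MulAction ℤ (FreeAlgebra ℤ (Fin m)) :=
  DistribMulAction.toMulAction

local instance (priority := 5000) instSemigroupActionInt :
    SemigroupAction ℤ (FreeAlgebra ℤ (Fin m)) := MulAction.toSemigroupAction

local instance (priority := 5000) instSMulWithZeroInt : SMulWithZero ℤ (FreeAlgebra ℤ (Fin m)) :=
  (Module.toMulActionWithZero (R := ℤ) (M := FreeAlgebra ℤ (Fin m))).toSMulWithZero

/-! ### The ideal generated by an integer and the variables -/

/-- The two-sided ideal `(p, x₁, …, x_m)` of `ℤ⟨x₁,…,x_m⟩`: the elements whose constant term is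
divisible by `p`. It is encoded as an additive subgroup (`ℤ`-submodule), for which powers are
available in noncommutative rings. -/
noncomputable def augIdeal (m p : ℕ) : Submodule ℤ (FreeAlgebra ℤ (Fin m)) where
  carrier := {a | (p : ℤ) ∣ FreeAlgebra.algebraMapInv a}
  add_mem' {a b} ha hb := by
    simp only [Set.mem_ofPred_eq, map_add] at *
    exact dvd_add ha hb
  zero_mem' := by simp
  smul_mem' c a ha := by
    simp only [Set.mem_ofPred_eq, map_smul] at *
    exact Dvd.dvd.mul_left ha c

lemma mem_augIdeal {p : ℕ} {a : FreeAlgebra ℤ (Fin m)} :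
    a ∈ augIdeal m p ↔ (p : ℤ) ∣ FreeAlgebra.algebraMapInv a := Iff.rfl

lemma augIdeal_mul_mem {p : ℕ} {a : FreeAlgebra ℤ (Fin m)} (ha : a ∈ augIdeal m p)
    (b : FreeAlgebra ℤ (Fin m)) : a * b ∈ augIdeal m p := by
  rw [mem_augIdeal] at *
  rw [map_mul]
  exact Dvd.dvd.mul_right ha _

lemma mul_augIdeal_mem {p : ℕ} {a : FreeAlgebra ℤ (Fin m)} (ha : a ∈ augIdeal m p)
    (b : FreeAlgebra ℤ (Fin m)) : b * a ∈ augIdeal m p := by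
  rw [mem_augIdeal] at *
  rw [map_mul]
  exact Dvd.dvd.mul_left ha _

lemma ι_mem_augIdeal (p : ℕ) (i : Fin m) : FreeAlgebra.ι ℤ i ∈ augIdeal m p := by
  simp [mem_augIdeal, FreeAlgebra.algebraMapInv]

lemma natCast_mem_augIdeal (m p : ℕ) : (p : FreeAlgebra ℤ (Fin m)) ∈ augIdeal m p := by
  rw [mem_augIdeal, map_natCast]

lemma augIdeal_sq_le (m p : ℕ) : augIdeal m p ^ 2 ≤ augIdeal m p := by
  rw [pow_two, Submodule.mul_le]
  exact fun a ha b _ => augIdeal_mul_mem ha b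

lemma augIdeal_sq_mul_mem {p : ℕ} {a : FreeAlgebra ℤ (Fin m)} (ha : a ∈ augIdeal m p ^ 2)
    (b : FreeAlgebra ℤ (Fin m)) : a * b ∈ augIdeal m p ^ 2 := by
  rw [pow_two] at *
  induction ha using Submodule.mul_induction_on' with
  | mem_mul_mem x hx y hy =>
    rw [mul_assoc]
    exact Submodule.mul_mem_mul hx (augIdeal_mul_mem hy b)
  | add x _ y _ hx hy => rw [add_mul]; exact add_mem hx hy

lemma mul_augIdeal_sq_mem {p : ℕ} {a : FreeAlgebra ℤ (Fin m)} (ha : a ∈ augIdeal m p ^ 2)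
    (b : FreeAlgebra ℤ (Fin m)) : b * a ∈ augIdeal m p ^ 2 := by
  rw [pow_two] at *
  induction ha using Submodule.mul_induction_on' with
  | mem_mul_mem x hx y hy =>
    rw [← mul_assoc]
    exact Submodule.mul_mem_mul (mul_augIdeal_mem hx b) hy
  | add x _ y _ hx hy => rw [mul_add]; exact add_mem hx hy

/-! ### Separation: the powers of the ideal intersect in zero -/

/-- The endomorphism `x_i ↦ p x_i`. -/
noncomputable def scale (m p : ℕ) : FreeAlgebra ℤ (Fin m) →ₐ[ℤ] FreeAlgebra ℤ (Fin m) :=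
  FreeAlgebra.lift ℤ fun i => (p : ℤ) • FreeAlgebra.ι ℤ i

lemma scale_eq_constant_add (p : ℕ) (a : FreeAlgebra ℤ (Fin m)) :
    ∃ b, scale m p a = algebraMap ℤ _ (FreeAlgebra.algebraMapInv a) + (p : ℤ) • b := by
  induction a using FreeAlgebra.induction with
  | grade0 r => exact ⟨0, by simp⟩
  | grade1 i => exact ⟨FreeAlgebra.ι ℤ i, by simp [scale, FreeAlgebra.algebraMapInv]⟩
  | mul a b ha hb =>
    obtain ⟨u, hu⟩ := ha
    obtain ⟨v, hv⟩ := hb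
    refine ⟨algebraMap ℤ _ (FreeAlgebra.algebraMapInv a) * v
      + u * algebraMap ℤ _ (FreeAlgebra.algebraMapInv b) + (p : ℤ) • (u * v), ?_⟩
    simp only [map_mul, hu, hv, add_mul, mul_add, smul_add, smul_mul_assoc, mul_smul_comm]
    abel
  | add a b ha hb =>
    obtain ⟨u, hu⟩ := ha
    obtain ⟨v, hv⟩ := hb
    refine ⟨u + v, ?_⟩
    simp only [map_add, hu, hv, smul_add]
    abel

lemma scale_of_mem_pow (p : ℕ) {k : ℕ} {a : FreeAlgebra ℤ (Fin m)}
    (ha : a ∈ augIdeal m p ^ k) : ∃ b, scale m p a = ((p : ℤ) ^ k) • b := by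
  induction ha using Submodule.pow_induction_on_left' with
  | algebraMap r => exact ⟨scale m p (algebraMap ℤ _ r), by simp⟩
  | add x y i hx hy ihx ihy =>
    obtain ⟨u, hu⟩ := ihx
    obtain ⟨v, hv⟩ := ihy
    exact ⟨u + v, by simp [hu, hv]⟩
  | mem_mul c hc i x hx ih =>
    obtain ⟨v, hv⟩ := ih
    obtain ⟨u, hu⟩ := scale_eq_constant_add p c
    obtain ⟨d, hd⟩ := mem_augIdeal.1 hc
    refine ⟨(algebraMap ℤ _ d + u) * v, ?_⟩
    have : scale m p c = (p : ℤ) • (algebraMap ℤ _ d + u) := by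
      rw [hu, hd, map_mul, smul_add, Algebra.smul_def, Algebra.smul_def]
    rw [map_mul, hv, this, smul_mul_smul_comm, Nat.succ_eq_add_one, pow_succ']

lemma coeff_scale (p : ℕ) (a : FreeAlgebra ℤ (Fin m)) (w : FreeMonoid (Fin m)) :
    (FreeAlgebra.equivMonoidAlgebraFreeMonoid (scale m p a)).coeff w =
      (p : ℤ) ^ w.length * (FreeAlgebra.equivMonoidAlgebraFreeMonoid a).coeff w := by
  have key : ∀ v : FreeMonoid (Fin m),
      FreeAlgebra.equivMonoidAlgebraFreeMonoid (scale m p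
        (FreeAlgebra.equivMonoidAlgebraFreeMonoid.symm (MonoidAlgebra.single v (1 : ℤ)))) =
      ((p : ℤ) ^ v.length) • MonoidAlgebra.single v (1 : ℤ) := by
    intro v
    induction v using FreeMonoid.inductionOn' with
    | one =>
      rw [← MonoidAlgebra.one_def]
      simp
    | of_mul x v ih =>
      have : (MonoidAlgebra.single (FreeMonoid.of x * v) (1 : ℤ)) =
          MonoidAlgebra.single (FreeMonoid.of x) 1 * MonoidAlgebra.single v 1 := by
        simp [MonoidAlgebra.single_mul_single]
      have hx : FreeAlgebra.equivMonoidAlgebraFreeMonoid (scale m p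
          (FreeAlgebra.equivMonoidAlgebraFreeMonoid.symm
            (MonoidAlgebra.single (FreeMonoid.of x) (1 : ℤ)))) =
          (p : ℤ) • MonoidAlgebra.single (FreeMonoid.of x) (1 : ℤ) := by
        simp [FreeAlgebra.equivMonoidAlgebraFreeMonoid, scale]
      rw [this, map_mul, map_mul, map_mul, ih, hx, smul_mul_smul_comm, FreeMonoid.length_mul,
        FreeMonoid.length_of, pow_add, pow_one]
  obtain ⟨f, rfl⟩ := FreeAlgebra.equivMonoidAlgebraFreeMonoid.symm.surjective a
  induction f using MonoidAlgebra.induction_linear with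
  | zero => simp
  | add f g hf hg =>
    simp only [map_add, MonoidAlgebra.coeff_add, Finsupp.add_apply, hf, hg, mul_add]
  | single v c =>
    have : MonoidAlgebra.single v c = c • MonoidAlgebra.single v (1 : ℤ) := by simp
    rw [this, map_smul, map_smul, map_smul, key, map_smul, AlgEquiv.apply_symm_apply]
    simp only [MonoidAlgebra.coeff_smul, MonoidAlgebra.coeff_single, Finsupp.smul_apply,
      smul_eq_mul]
    by_cases h : v = w
    · subst h; ring
    · simp [Finsupp.single_eq_of_ne' h]

/-- The intersection of all powers of `(p, x₁, …, x_m)` is zero. -/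
lemma eq_zero_of_forall_mem_augIdeal_pow {p : ℕ} (hp : 2 ≤ p) {a : FreeAlgebra ℤ (Fin m)}
    (ha : ∀ k, 2 ≤ k → a ∈ augIdeal m p ^ k) : a = 0 := by
  apply FreeAlgebra.equivMonoidAlgebraFreeMonoid.injective
  rw [map_zero]
  ext w
  have h0 : (p : ℤ) ^ w.length * (FreeAlgebra.equivMonoidAlgebraFreeMonoid a).coeff w = 0 := by
    by_contra hne
    -- an integer divisible by every large power of `p` vanishes
    have hfin : FiniteMultiplicity (p : ℤ)
        ((p : ℤ) ^ w.length * (FreeAlgebra.equivMonoidAlgebraFreeMonoid a).coeff w) := by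
      rw [Int.finiteMultiplicity_iff]
      exact ⟨by simp; omega, hne⟩
    obtain ⟨n, hn⟩ := hfin
    apply hn
    obtain ⟨b, hb⟩ := scale_of_mem_pow p (ha (n + 2) (by omega))
    rw [← coeff_scale, hb, map_smul, MonoidAlgebra.coeff_smul, Finsupp.smul_apply, smul_eq_mul]
    exact Dvd.dvd.mul_right (pow_dvd_pow _ (by omega)) _
  rcases mul_eq_zero.1 h0 with h | h
  · exact absurd h (pow_ne_zero _ (by exact_mod_cast (by omega : p ≠ 0)))
  · simpa using h

/-! ### The congruence subgroup -/

/-- The homomorphism `x_i ↦ ε_i` onto the finite ring `ℤ/p² ⊕ ⨁ (ℤ/p²) ε_i`, `ε_i ε_j = 0`. -/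
noncomputable def jet (m p : ℕ) :
    FreeAlgebra ℤ (Fin m) →ₐ[ℤ] TrivSqZeroExt (ZMod (p ^ 2)) (Fin m → ZMod (p ^ 2)) :=
  FreeAlgebra.lift ℤ fun i => TrivSqZeroExt.inr (Pi.single i 1)

/-- Modulo the square of the ideal, every element is an affine combination `c + ∑ dᵢ xᵢ`, and the
coefficients modulo `p²` are read off by `jet`. -/
lemma exists_affine (p : ℕ) (a : FreeAlgebra ℤ (Fin m)) :
    ∃ (c : ℤ) (d : Fin m → ℤ),
      a - (algebraMap ℤ _ c + ∑ i, d i • FreeAlgebra.ι ℤ i) ∈ augIdeal m p ^ 2 ∧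
      (jet m p a).fst = c ∧ ∀ i, (jet m p a).snd i = d i := by
  induction a using FreeAlgebra.induction with
  | grade0 r => exact ⟨r, 0, by simp, by simp, by simp⟩
  | grade1 j =>
    refine ⟨0, Pi.single j 1, by simp [Pi.single_apply], by simp [jet], ?_⟩
    intro i
    simp [jet, Pi.single_apply]
  | mul a b ha hb =>
    obtain ⟨c, d, h1, h2, h3⟩ := ha
    obtain ⟨c', d', h1', h2', h3'⟩ := hb
    -- the product rule for affine combinations, as `x_i x_j ∈ M²`
    refine ⟨c * c', fun i => c * d' i + c' * d i, ?_, by simp [h2, h2'], ?_⟩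
    · set s := ∑ i, d i • FreeAlgebra.ι ℤ i with hs
      set s' := ∑ i, d' i • FreeAlgebra.ι ℤ i with hs'
      have hsM : s ∈ augIdeal m p :=
        sum_mem fun i _ => Submodule.smul_mem _ _ (ι_mem_augIdeal p i)
      have hsM' : s' ∈ augIdeal m p :=
        sum_mem fun i _ => Submodule.smul_mem _ _ (ι_mem_augIdeal p i)
      have hsum : ∑ i, (c * d' i + c' * d i) • FreeAlgebra.ι ℤ i = c • s' + c' • s := by
        simp only [hs, hs', Finset.smul_sum, add_smul, mul_smul, Finset.sum_add_distrib]
      have hss : s * s' ∈ augIdeal m p ^ 2 := by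
        rw [pow_two]; exact Submodule.mul_mem_mul hsM hsM'
      have e : a * b - (algebraMap ℤ _ (c * c') +
          ∑ i, (c * d' i + c' * d i) • FreeAlgebra.ι ℤ i) =
          s * s' + (a - (algebraMap ℤ _ c + s)) * b
            + (algebraMap ℤ _ c + s) * (b - (algebraMap ℤ _ c' + s')) := by
        have hc : s * algebraMap ℤ _ c' = c' • s := by
          rw [Algebra.smul_def, Algebra.commutes]
        rw [hsum, map_mul, Algebra.smul_def c s', ← hc]
        noncomm_ring
      rw [e]
      exact add_mem (add_mem hss (augIdeal_sq_mul_mem h1 b)) (mul_augIdeal_sq_mem h1' _)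
    · intro i
      simp [h2, h2', h3, h3', mul_comm]
  | add a b ha hb =>
    obtain ⟨c, d, h1, h2, h3⟩ := ha
    obtain ⟨c', d', h1', h2', h3'⟩ := hb
    refine ⟨c + c', d + d', ?_, by simp [h2, h2'], by simp [h3, h3']⟩
    convert! add_mem h1 h1' using 1
    simp only [Pi.add_apply, add_smul, Finset.sum_add_distrib, map_add]
    abel

/-- The kernel of `jet` lies in the square of the ideal, since `p² ∈ M²` and `p² x_i ∈ M²`. -/
lemma mem_sq_of_jet_eq_zero {p : ℕ} {a : FreeAlgebra ℤ (Fin m)} (ha : jet m p a = 0) :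
    a ∈ augIdeal m p ^ 2 := by
  obtain ⟨c, d, h1, h2, h3⟩ := exists_affine p a
  have hpp : (p : FreeAlgebra ℤ (Fin m)) * p ∈ augIdeal m p ^ 2 := by
    rw [pow_two]; exact Submodule.mul_mem_mul (natCast_mem_augIdeal m p) (natCast_mem_augIdeal m p)
  have key : ∀ z : ℤ, (z : ZMod (p ^ 2)) = 0 →
      algebraMap ℤ (FreeAlgebra ℤ (Fin m)) z ∈ augIdeal m p ^ 2 := by
    intro z hz
    rw [ZMod.intCast_zmod_eq_zero_iff_dvd] at hz
    obtain ⟨y, rfl⟩ := hz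
    have : algebraMap ℤ (FreeAlgebra ℤ (Fin m)) (((p ^ 2 : ℕ) : ℤ) * y) =
        (p : FreeAlgebra ℤ (Fin m)) * p * algebraMap ℤ _ y := by
      rw [map_mul, map_natCast, Nat.cast_pow, pow_two]
    rw [this]
    exact augIdeal_sq_mul_mem hpp _
  have hc := key c (by rw [← h2, ha]; rfl)
  have hd : ∀ i, d i • FreeAlgebra.ι ℤ i ∈ augIdeal m p ^ 2 := fun i => by
    rw [Algebra.smul_def]
    exact augIdeal_sq_mul_mem (key (d i) (by rw [← h3, ha]; rfl)) _
  have := add_mem h1 (add_mem hc (sum_mem fun i (_ : i ∈ Finset.univ) => hd i))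
  simpa using this

/-- The automorphisms `g` with `jet ∘ g = jet`. -/
def congrSubgroup (m p : ℕ) : Subgroup (FreeAlgebra ℤ (Fin m) ≃+* FreeAlgebra ℤ (Fin m)) where
  carrier := {g | ∀ a, jet m p (g a) = jet m p a}
  one_mem' _ := rfl
  mul_mem' {g h} hg hh a := (hg (h a)).trans (hh a)
  inv_mem' {g} hg a := by
    have := hg (g⁻¹ a)
    rw [← this, ← RingAut.mul_apply, mul_inv_cancel, RingAut.one_apply]

lemma congrSubgroup_index_ne_zero (m : ℕ) {p : ℕ} (hp : 2 ≤ p) :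
    (congrSubgroup m p).index ≠ 0 := by
  have : NeZero (p ^ 2) := ⟨pow_ne_zero _ (by omega)⟩
  have : Finite (TrivSqZeroExt (ZMod (p ^ 2)) (Fin m → ZMod (p ^ 2))) :=
    inferInstanceAs (Finite (ZMod (p ^ 2) × (Fin m → ZMod (p ^ 2))))
  -- a ring homomorphism out of the free ring is determined by the images of the generators
  let F : (FreeAlgebra ℤ (Fin m) ≃+* FreeAlgebra ℤ (Fin m)) →
      (Fin m → TrivSqZeroExt (ZMod (p ^ 2)) (Fin m → ZMod (p ^ 2))) :=
    fun g i => jet m p (g⁻¹ (FreeAlgebra.ι ℤ i))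
  have hF : ∀ g h, F g = F h → g⁻¹ * h ∈ congrSubgroup m p := by
    intro g h hgh
    have e : ((jet m p).comp (RingHom.toIntAlgHom (g⁻¹ : FreeAlgebra ℤ (Fin m) ≃+* _).toRingHom)) =
        ((jet m p).comp (RingHom.toIntAlgHom (h⁻¹ : FreeAlgebra ℤ (Fin m) ≃+* _).toRingHom)) :=
      FreeAlgebra.hom_ext (funext fun i => congrFun hgh i)
    intro a
    have := DFunLike.congr_fun e (h a)
    change jet m p (g⁻¹ (h a)) = jet m p (h⁻¹ (h a)) at this
    rw [RingAut.mul_apply, this, ← RingAut.mul_apply, inv_mul_cancel, RingAut.one_apply]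
  have : Finite ((FreeAlgebra ℤ (Fin m) ≃+* FreeAlgebra ℤ (Fin m)) ⧸ congrSubgroup m p) := by
    refine Finite.of_injective (fun q => F q.out) fun q r hqr => ?_
    rw [← QuotientGroup.out_eq' q, ← QuotientGroup.out_eq' r]
    exact QuotientGroup.eq.2 (hF _ _ hqr)
  exact Subgroup.finiteIndex_of_finite_quotient.index_ne_zero

/-! ### Torsion in the congruence subgroup -/

lemma sub_mem_augIdeal_sq {p : ℕ} {g : FreeAlgebra ℤ (Fin m) ≃+* FreeAlgebra ℤ (Fin m)}
    (hg : g ∈ congrSubgroup m p) (a : FreeAlgebra ℤ (Fin m)) :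
    g a - a ∈ augIdeal m p ^ 2 :=
  mem_sq_of_jet_eq_zero (by rw [map_sub, hg a, sub_self])

/-- Elements of the congruence subgroup act trivially on each `Mᵏ / Mᵏ⁺¹`. -/
lemma sub_mem_augIdeal_pow {p : ℕ} {g : FreeAlgebra ℤ (Fin m) ≃+* FreeAlgebra ℤ (Fin m)}
    (hg : g ∈ congrSubgroup m p) {k : ℕ} {a : FreeAlgebra ℤ (Fin m)}
    (ha : a ∈ augIdeal m p ^ k) : g a - a ∈ augIdeal m p ^ (k + 1) := by
  induction ha using Submodule.pow_induction_on_left' with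
  | algebraMap r => simp
  | add x y i hx hy ihx ihy =>
    rw [map_add, add_sub_add_comm]
    exact add_mem ihx ihy
  | mem_mul c hc i x hx ih =>
    have e : g (c * x) - c * x = (g c - c) * x + g c * (g x - x) := by
      rw [map_mul]; noncomm_ring
    have hgc : g c ∈ augIdeal m p := by
      have := add_mem (augIdeal_sq_le m p (sub_mem_augIdeal_sq hg c)) hc
      simpa using this
    rw [e]
    refine add_mem ?_ ?_
    · have := Submodule.mul_mem_mul (sub_mem_augIdeal_sq hg c) hx
      rwa [← pow_add, show 2 + i = i.succ + 1 by omega] at this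
    · rw [pow_succ' _ i.succ]
      exact Submodule.mul_mem_mul hgc ih

/-- The congruence subgroup for `p` has no nontrivial torsion of order prime to `p`. -/
lemma eq_one_of_pow_eq_one {p n : ℕ} (hp : 2 ≤ p) (hn : IsCoprime (n : ℤ) p)
    {g : FreeAlgebra ℤ (Fin m) ≃+* FreeAlgebra ℤ (Fin m)}
    (hg : g ∈ congrSubgroup m p) (hgn : g ^ n = 1) : g = 1 := by
  have key : ∀ k, 2 ≤ k → ∀ a, g a - a ∈ augIdeal m p ^ k := by
    intro k hk
    induction k, hk using Nat.le_induction with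
    | base => exact sub_mem_augIdeal_sq hg
    | succ k hk ih =>
      intro a
      have hb := ih a
      have hi : ∀ i : ℕ, (g ^ i) a - a - (i : ℤ) • (g a - a) ∈ augIdeal m p ^ (k + 1) := by
        intro i
        induction i with
        | zero => simp
        | succ i ihi =>
          have h2 := add_mem ihi (sub_mem_augIdeal_pow (pow_mem hg i) hb)
          convert! h2 using 1
          rw [pow_succ, RingAut.mul_apply, map_sub]
          push_cast
          rw [add_smul, one_smul]
          abel
      have h1 : (n : ℤ) • (g a - a) ∈ augIdeal m p ^ (k + 1) := by
        have := hi n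
        rw [hgn, RingAut.one_apply, sub_self, zero_sub] at this
        simpa only [neg_neg] using neg_mem this
      have h2 : (p : ℤ) • (g a - a) ∈ augIdeal m p ^ (k + 1) := by
        rw [pow_succ', Algebra.smul_def, map_natCast]
        exact Submodule.mul_mem_mul (natCast_mem_augIdeal m p) hb
      obtain ⟨u, v, huv⟩ := hn
      have := add_mem (Submodule.smul_mem _ u h1) (Submodule.smul_mem _ v h2)
      rwa [← mul_smul, ← mul_smul, ← add_smul, huv, one_smul] at this
  ext a
  exact sub_eq_zero.1 (eq_zero_of_forall_mem_augIdeal_pow hp fun k hk => key k hk a)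

end FreeRingAut

open FreeRingAut in
/-- Proposition 2: The automorphism group of the free associative ring
`ℤ⟨x₁,…,x_m⟩`, `m ≥ 2`, is virtually torsion free. -/
theorem stmt_9 (m : ℕ) (hm : 2 ≤ m) :
    ∃ H : Subgroup (FreeAlgebra ℤ (Fin m) ≃+* FreeAlgebra ℤ (Fin m)),
      H.index ≠ 0 ∧ ∀ h ∈ H, IsOfFinOrder h → h = 1 := by
  refine ⟨congrSubgroup m 2 ⊓ congrSubgroup m 3,
    Subgroup.index_inf_ne_zero (congrSubgroup_index_ne_zero m le_rfl)
      (congrSubgroup_index_ne_zero m (by norm_num)), ?_⟩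
  intro h hh hfin
  by_contra hne
  have h1 : orderOf h ≠ 1 := fun e => hne (orderOf_eq_one_iff.1 e)
  set l := (orderOf h).minFac with hl
  have hlp : l.Prime := Nat.minFac_prime h1
  have hord : orderOf (h ^ (orderOf h / l)) = l :=
    orderOf_pow_orderOf_div hfin.orderOf_pos.ne' (Nat.minFac_dvd _)
  have hmem := pow_mem hh (orderOf h / l)
  have hpow : (h ^ (orderOf h / l)) ^ l = 1 := by
    have := pow_orderOf_eq_one (h ^ (orderOf h / l))
    rwa [hord] at this
  have hone : h ^ (orderOf h / l) = 1 := by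
    by_cases h2 : l = 2
    · refine eq_one_of_pow_eq_one (p := 3) (by norm_num) ?_ hmem.2 hpow
      rw [h2]
      exact Nat.isCoprime_iff_coprime.2 (by norm_num)
    · refine eq_one_of_pow_eq_one (p := 2) le_rfl ?_ hmem.1 hpow
      exact Nat.isCoprime_iff_coprime.2 ((Nat.coprime_primes hlp Nat.prime_two).2 h2)
  rw [hone, orderOf_one] at hord
  exact hlp.one_lt.ne hord
end

section
/- Let A be a finitely generated commutative ring and let L be a Lie subring of the Lie ring Der(A) of derivations of A such that every derivation belonging to L is locally nilpotent. Then L is weakly Engel: for all d₁, d₂ ∈ L there exists an integer n ≥ 1 such that (ad d₁)ⁿ(d₂) = 0, where ad(d₁)(d₂) = d₁∘d₂ − d₂∘d₁. -/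
/-!
For `d = d₁` and `e = d₂`, put `fₙ = (ad d)ⁿ e`, so that
`fₙ₊₁ a = d (fₙ a) - fₙ (d a)`. If `fₙ (d a) = 0` for all `n ≥ N`, this gives
`f_{N+k} a = dᵏ (f_N a)`, which vanishes for large `k`. By induction on `m` with
`dᵐ a = 0`, for each `a` the sequence `fₙ a` is eventually zero. As `A` is finitely generated,
some `fₙ` kills all the generators, and a derivation killing the generators is zero.
-/

/-- If `d` is locally nilpotent and `dᵐ a = 0`, then `(ad d)ⁿ e` kills `a` for all large `n`. -/
theorem ad_pow_apply_eventually_zero {A : Type*} [CommRing A] (d e : Derivation ℤ A A)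
    (hd : ∀ a : A, ∃ n : ℕ, 1 ≤ n ∧ (Derivation.toLinearMap d ^ n) a = 0) (m : ℕ) :
    ∀ a : A, (Derivation.toLinearMap d ^ m) a = 0 →
      ∃ N : ℕ, ∀ n, N ≤ n → (LieAlgebra.ad ℤ (Derivation ℤ A A) d ^ n) e a = 0 := by
  induction m with
  | zero =>
    intro a ha
    have ha' : a = 0 := by simpa using ha
    exact ⟨0, fun n _ => by rw [ha', map_zero]⟩
  | succ m ih =>
    intro a ha
    obtain ⟨N, hN⟩ := ih (d a) (by simpa [pow_succ] using ha)
    have key : ∀ k, (LieAlgebra.ad ℤ (Derivation ℤ A A) d ^ (N + k)) e a =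
        (Derivation.toLinearMap d ^ k) ((LieAlgebra.ad ℤ (Derivation ℤ A A) d ^ N) e a) := by
      intro k
      induction k with
      | zero => simp
      | succ k ihk =>
        rw [← add_assoc, pow_succ', Module.End.mul_apply, LieAlgebra.ad_apply,
          Derivation.commutator_apply, hN _ (Nat.le_add_right N k), sub_zero, ihk, pow_succ',
          Module.End.mul_apply]
        rfl
    obtain ⟨k, -, hk⟩ := hd ((LieAlgebra.ad ℤ (Derivation ℤ A A) d ^ N) e a)
    refine ⟨N + k, fun n hn => ?_⟩
    obtain ⟨j, rfl⟩ := Nat.exists_eq_add_of_le hn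
    rw [add_assoc, key, add_comm k j, pow_add, Module.End.mul_apply, hk, map_zero]

/-- Lemma 4: Let `A` be a finitely generated commutative ring and `L ⊆ Der(A)` a Lie
subring consisting of locally nilpotent derivations.  Then `L` is weakly Engel. -/
theorem stmt_10 (A : Type*) [CommRing A] (hfg : Algebra.FiniteType ℤ A)
    (L : LieSubalgebra ℤ (Derivation ℤ A A))
    (hln : ∀ d ∈ L, ∀ a : A, ∃ n : ℕ, 1 ≤ n ∧ (Derivation.toLinearMap d ^ n) a = 0)
    (d₁ d₂ : Derivation ℤ A A) (h₁ : d₁ ∈ L) (h₂ : d₂ ∈ L) :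
    ∃ n : ℕ, 1 ≤ n ∧ (LieAlgebra.ad ℤ (Derivation ℤ A A) d₁ ^ n) d₂ = 0 := by
  obtain ⟨s, hs⟩ := hfg.out
  have hN : ∀ a : A, ∃ N : ℕ, ∀ n, N ≤ n →
      (LieAlgebra.ad ℤ (Derivation ℤ A A) d₁ ^ n) d₂ a = 0 := fun a => by
    obtain ⟨m, -, hm⟩ := hln d₁ h₁ a
    exact ad_pow_apply_eventually_zero d₁ d₂ (hln d₁ h₁) m a hm
  choose N hN using hN
  refine ⟨s.sup N + 1, Nat.le_add_left _ _, ?_⟩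
  refine Derivation.ext_of_adjoin_eq_top (s : Set A) hs fun a ha => ?_
  rw [hN a _ ((Finset.le_sup (f := N) (Finset.mem_coe.mp ha)).trans (Nat.le_succ _))]
  rfl
end

section
/- Let A be a finitely generated commutative ring and let L be a Lie subring of the Lie ring Der(A) of derivations of A. Define A_L = {a ∈ A : for every d ∈ L there exists an integer n ≥ 1 with dⁿ(a) = 0}. If A_L is an order in A, then L is weakly Engel: for all d₁, d₂ ∈ L there exists an integer n ≥ 1 such that (ad d₁)ⁿ(d₂) = 0. -/
/-!
Write `R = A_L`. The substance of the proof is that `R` is stable under `L`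
(`mem_ALset_of_mem`); granting this, `(ad d₁)ⁿ d₂` kills a given `b ∈ R` for `n` large, by
induction on the nilpotency order of `d₁` on `b` (`exists_ad_pow_apply`), and as `A` is obtained
from finitely many elements of `R` by inverting a unit, `(ad d₁)ⁿ d₂ = 0` for `n` large.

For the stability, fix `b ∈ R`, `d₁, d₂ ∈ L`, `e = [d₁, d₂]`, and a finite family `b i` of
elements of `R`, one of them `b`, generating a subring which contains a unit `s` of `A` such that
every element of `A` is a quotient by a power of `s`. For `δ ∈ L` the map
`a ↦ ∑ tⁿ δⁿ(a) / n!` is a ring homomorphism from `A` to power series over `B = ℚ ⊗ A` which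
takes the `b i` to polynomials. Apply this to `d₁` and to `d₁ + q⁻¹ e` for `q = 1, 2, …`,
then take a matrix representation of `B`. The vectors of polynomials in the `b i` become entire
functions `y` and `Y q` solving ODEs `y' = Φ(y)` and `Y' = Φ(Y) + q⁻¹ Θ(Y)`, with the same
initial value. The fields `Φ, Θ` are regular where the function representing `s` is invertible,
which excludes only finitely many times. A Gronwall comparison along a path (`ode_compare`) gives
`Y q - y = O(1/q)` on circles of arbitrarily large radius, and Cauchy's estimates bound the
coefficients of `q (Y q - y)`. The limit `q → ∞` of its `n`-th coefficient for `b` is the image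
of `(d₁ⁿ (d₂ b) - d₂ (d₁ⁿ b)) / n!`, hence of `d₁ⁿ (d₂ b) / n!` for `n` large. So
`x n = d₁ⁿ (d₂ b) / n!` decays faster than any geometric sequence in every finite-dimensional
representation of `B` (`decay`, `decay_functional`).

On the other hand `c * d₂ b ∈ R` for some unit `c ∈ R`, so `x` satisfies a linear recurrence over
`B`. Since `B` is a Noetherian Jacobson ring, the Nullstellensatz and the Artin–Rees lemma reduce
the eventual vanishing of `x` to the quotients `B ⧸ 𝔪 ^ k`, finite-dimensional over `ℚ`, where
it follows from the decay (`nilpotent_of_decay`). Thus `d₁ⁿ (d₂ b)` is a torsion element for some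
`n`, and torsion elements are dealt with by a direct computation (`nilpotent_of_torsion`).
-/

/-- For a Lie subring `L` of `Der(A)`, the subring `A_L` of elements on which every
`d ∈ L` acts nilpotently. -/
def ALset {A : Type*} [CommRing A] (L : LieSubalgebra ℤ (Derivation ℤ A A)) : Set A :=
  {a : A | ∀ d ∈ L, ∃ n : ℕ, 1 ≤ n ∧ (Derivation.toLinearMap d ^ n) a = 0}

/-! ### Comparison of perturbed differential equations -/

/-- On a neighbourhood of uniform size of a compact subset `K` of `U`, the field `Φ` satisfies a
uniform Lipschitz estimate based at the points of `K`, and `Θ` is bounded. -/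
lemma unif_lip {V : Type*} [NormedAddCommGroup V] [NormedSpace ℂ V] {U : Set V} (hU : IsOpen U)
    {Φ Θ : V → V} (hΦ : ∀ v ∈ U, ContDiffAt ℂ 1 Φ v) (hΘ : ∀ v ∈ U, ContinuousAt Θ v)
    {K : Set V} (hK : IsCompact K) (hKU : K ⊆ U) :
    ∃ δ > 0, ∃ κ ≥ 0, ∃ M ≥ 0, ∀ x ∈ K, ∀ v, ‖v - x‖ ≤ δ →
      v ∈ U ∧ ‖Φ v - Φ x‖ ≤ κ * ‖v - x‖ ∧ ‖Θ v‖ ≤ M := by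
  refine hK.induction_on (p := fun S => ∃ δ > (0 : ℝ), ∃ κ ≥ (0 : ℝ), ∃ M ≥ (0 : ℝ),
    ∀ x ∈ S, ∀ v, ‖v - x‖ ≤ δ → v ∈ U ∧ ‖Φ v - Φ x‖ ≤ κ * ‖v - x‖ ∧ ‖Θ v‖ ≤ M) ?_ ?_ ?_ ?_
  · exact ⟨1, one_pos, 0, le_rfl, 0, le_rfl, by simp⟩
  · rintro s t hst ⟨δ, hδ, κ, hκ, M, hM, h⟩
    exact ⟨δ, hδ, κ, hκ, M, hM, fun x hx => h x (hst hx)⟩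
  · rintro s t ⟨δ, hδ, κ, hκ, M, hM, h⟩ ⟨δ', hδ', κ', hκ', M', hM', h'⟩
    refine ⟨min δ δ', lt_min hδ hδ', max κ κ', le_max_of_le_left hκ, max M M',
      le_max_of_le_left hM, ?_⟩
    rintro x (hx | hx) v hv
    · obtain ⟨a, b, c⟩ := h x hx v (hv.trans (min_le_left _ _))
      exact ⟨a, b.trans (by gcongr; exact le_max_left _ _), c.trans (le_max_left _ _)⟩
    · obtain ⟨a, b, c⟩ := h' x hx v (hv.trans (min_le_right _ _))
      exact ⟨a, b.trans (by gcongr; exact le_max_right _ _), c.trans (le_max_right _ _)⟩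
  · intro x hx
    obtain ⟨κ, t, ht, hL⟩ := (hΦ x (hKU hx)).exists_lipschitzOnWith
    have hb : ∀ᶠ v in nhds x, ‖Θ v‖ < ‖Θ x‖ + 1 :=
      (hΘ x (hKU hx)).norm.eventually (gt_mem_nhds (lt_add_one _))
    have hall : ∀ᶠ v in nhds x, v ∈ t ∧ v ∈ U ∧ ‖Θ v‖ < ‖Θ x‖ + 1 :=
      (Filter.eventually_mem_set.2 ht).and ((hU.eventually_mem (hKU hx)).and hb)
    obtain ⟨ε, hε, hball⟩ := Metric.eventually_nhds_iff.1 hall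
    refine ⟨Metric.ball x (ε / 2), mem_nhdsWithin_of_mem_nhds (Metric.ball_mem_nhds x (half_pos hε)),
      ε / 4, by positivity, κ, κ.2, ‖Θ x‖ + 1, by positivity, ?_⟩
    intro z hz v hv
    rw [Metric.mem_ball] at hz
    have hvz : dist v z ≤ ε / 4 := by rwa [dist_eq_norm]
    have hvx : dist v x < ε := by linarith [dist_triangle v z x]
    have hzx : dist z x < ε := by linarith
    obtain ⟨h1, h2, h3⟩ := hball hvx
    refine ⟨h2, ?_, h3.le⟩
    have := hL.dist_le_mul v h1 z (hball hzx).1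
    rwa [dist_eq_norm, dist_eq_norm] at this

/-- Gronwall comparison for holomorphic ODEs along a path: if `y' = Φ(y)` and
`Y q' = Φ(Y q) + q⁻¹ Θ(Y q)` as long as the solutions stay in `U`, if `y ∘ γ` stays in `U`, and if
`Y q - y = O(1/q)` at the start of `γ`, then `Y q - y = O(1/q)` uniformly on `γ`. That `Y q ∘ γ`
stays in `U` for large `q` is part of what has to be shown. -/
lemma ode_compare {V : Type*} [NormedAddCommGroup V] [NormedSpace ℂ V] {U : Set V}
    (hU : IsOpen U) {Φ Θ : V → V} (hΦ : ∀ v ∈ U, ContDiffAt ℂ 1 Φ v)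
    (hΘ : ∀ v ∈ U, ContinuousAt Θ v)
    {y : ℂ → V} {Y : ℕ → ℂ → V} (hyd : Differentiable ℂ y) (hYd : ∀ q, Differentiable ℂ (Y q))
    (hy : ∀ u, y u ∈ U → deriv y u = Φ (y u))
    (hY : ∀ q u, 1 ≤ q → Y q u ∈ U → deriv (Y q) u = Φ (Y q u) + (q : ℂ)⁻¹ • Θ (Y q u))
    {γ γ' : ℝ → ℂ} (hγ : ∀ t, HasDerivAt γ (γ' t) t) (hγ' : Continuous γ')
    (hγU : ∀ t ∈ Set.Icc (0 : ℝ) 1, y (γ t) ∈ U)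
    (h0 : ∃ C : ℝ, ∃ q₀ : ℕ, ∀ q ≥ q₀, ‖Y q (γ 0) - y (γ 0)‖ ≤ C / q) :
    ∃ C : ℝ, ∃ q₀ : ℕ, ∀ q ≥ q₀, ∀ t ∈ Set.Icc (0 : ℝ) 1, ‖Y q (γ t) - y (γ t)‖ ≤ C / q := by
  have hγc : Continuous γ := continuous_iff_continuousAt.2 fun t => (hγ t).continuousAt
  obtain ⟨δ, hδ, κ, hκ, M, hM, hlip⟩ := unif_lip hU hΦ hΘ
    (K := (fun t => y (γ t)) '' Set.Icc (0 : ℝ) 1)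
    (isCompact_Icc.image (hyd.continuous.comp hγc)) (by rintro _ ⟨t, ht, rfl⟩; exact hγU t ht)
  obtain ⟨G, hG⟩ := isCompact_Icc.exists_bound_of_continuousOn (s := Set.Icc (0 : ℝ) 1)
    hγ'.continuousOn
  have hG0 : 0 ≤ G := (norm_nonneg _).trans (hG 0 (by simp))
  obtain ⟨C, q₀, h0⟩ := h0
  set c : ℝ := G * M + |C| + 1 with hc
  have hc0 : 0 < c := by positivity
  set k : ℝ := G * κ + 1 with hk
  have hk0 : 0 < k := by positivity
  obtain ⟨q₁, hq₁⟩ := exists_nat_ge (c * Real.exp k / δ)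
  refine ⟨c * Real.exp k, max (max q₀ q₁) 1, fun q hq => ?_⟩
  have hq0 : q₀ ≤ q := (le_max_left _ _).trans ((le_max_left _ _).trans hq)
  have hq1 : q₁ ≤ q := (le_max_right _ _).trans ((le_max_left _ _).trans hq)
  have hq2 : 1 ≤ q := (le_max_right _ _).trans hq
  have hqpos : (0 : ℝ) < q := by exact_mod_cast hq2
  set B : ℝ → ℝ := fun t => c / q * Real.exp (k * t) with hB
  have hBle : ∀ t ≤ 1, B t ≤ c * Real.exp k / q := by
    intro t ht
    have : Real.exp (k * t) ≤ Real.exp k := Real.exp_le_exp.2 (by nlinarith)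
    calc B t ≤ c / q * Real.exp k := by simp only [hB]; gcongr
      _ = _ := by ring
  have hBδ : c * Real.exp k / q ≤ δ := by
    rw [div_le_iff₀ hqpos, mul_comm δ, ← div_le_iff₀ hδ]
    exact hq₁.trans (by exact_mod_cast hq1)
  set f : ℝ → V := fun t => Y q (γ t) - y (γ t) with hf
  have hfd : ∀ t, HasDerivAt f (γ' t • (deriv (Y q) (γ t) - deriv y (γ t))) t := by
    intro t
    have h1 := ((hYd q (γ t)).hasDerivAt).scomp t (hγ t)
    have h2 := ((hyd (γ t)).hasDerivAt).scomp t (hγ t)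
    rw [smul_sub]
    exact h1.sub h2
  -- `B` satisfies `B' = k B` and starts above `‖f 0‖`; while `‖f‖ ≤ B ≤ δ`, the solution `Y q` stays
  -- in `U` and `‖f'‖ < B'`.
  have key := image_norm_le_of_norm_deriv_right_lt_deriv_boundary (f := f) (a := 0) (b := 1)
    (f' := fun t => γ' t • (deriv (Y q) (γ t) - deriv y (γ t))) (B := B)
    (B' := fun t => k * B t)
    (fun t _ => (hfd t).continuousAt.continuousWithinAt) (fun t _ => (hfd t).hasDerivWithinAt)
    ?_ ?_ ?_
  · intro t ht
    exact (key ht).trans (hBle t ht.2)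
  · refine (h0 q hq0).trans ?_
    simp only [hB, mul_zero, Real.exp_zero, mul_one]
    gcongr
    have := le_abs_self C
    have : 0 ≤ G * M := by positivity
    linarith
  · intro t
    have : HasDerivAt (fun t => Real.exp (k * t)) (Real.exp (k * t) * (k * 1)) t :=
      ((hasDerivAt_id t).const_mul k).exp
    have h2 := this.const_mul (c / q)
    have e : c / q * (Real.exp (k * t) * (k * 1)) = k * B t := by simp only [hB]; ring
    rw [e] at h2
    exact h2
  · intro t ht hft
    have htI : t ∈ Set.Icc (0 : ℝ) 1 := ⟨ht.1, ht.2.le⟩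
    obtain ⟨hu, hl, hm⟩ := hlip (y (γ t)) ⟨t, htI, rfl⟩ (Y q (γ t))
      (hft.le.trans ((hBle t htI.2).trans hBδ))
    rw [hY q _ hq2 hu, hy _ (hγU t htI), norm_smul]
    have hd : ‖Φ (Y q (γ t)) + (q : ℂ)⁻¹ • Θ (Y q (γ t)) - Φ (y (γ t))‖ ≤ κ * B t + M / q := by
      rw [add_sub_right_comm]
      refine (norm_add_le _ _).trans (add_le_add ?_ ?_)
      · rw [← hft]; exact hl
      · rw [norm_smul, norm_inv, Complex.norm_natCast, inv_mul_eq_div]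
        gcongr
    have hBge : c / q ≤ B t := by
      simp only [hB]
      refine le_mul_of_one_le_right (by positivity) (Real.one_le_exp (mul_nonneg hk0.le ht.1))
    calc ‖γ' t‖ * _ ≤ G * (κ * B t + M / q) := by
          gcongr
          exact hG t htI
      _ = G * κ * B t + G * M / q := by ring
      _ < G * κ * B t + c / q := by
          have : G * M / q < c / q := by
            gcongr
            have := abs_nonneg C
            linarith
          linarith
      _ ≤ k * B t := by rw [hk]; linarith

/-! ### Exponential series of derivations -/

open Polynomial PowerSeries in
/-- The ring homomorphism `a ↦ ∑ (ε t)ⁿ δⁿ(a) / n!` from `A` to power series in `t` over the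
`ℚ`-algebra `B`, formed with the images under `φ` of the elements `δⁿ(a)`. The scalar `ε` makes it
possible to encode `δ = d + q⁻¹ e` through the integral combination `q d + e` and `ε = q⁻¹`. -/
noncomputable def expSeries {A B : Type*} [CommRing A] [CommRing B] [Algebra ℚ B] (φ : A →+* B)
    (δ : Derivation ℤ A A) (ε : ℚ) : A →+* PowerSeries B :=
  let E : A → PowerSeries B := fun a =>
    PowerSeries.mk fun n => (ε ^ n * (n.factorial : ℚ)⁻¹) • φ (δ^[n] a)
  have hadd : ∀ a b, E (a + b) = E a + E b := fun a b => by
    ext n; simp [E, iterate_map_add, smul_add]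
  have hder : ∀ a, d⁄dX B (E a) = ε • E (δ a) := fun a => by
    ext n
    rw [PowerSeries.coeff_derivative, PowerSeries.coeff_smul]
    simp only [E, PowerSeries.coeff_mk, Function.iterate_succ_apply, smul_smul]
    have h : (n + 1 : B) = algebraMap ℚ B (n + 1) := by simp
    rw [h, mul_comm, ← Algebra.smul_def, smul_smul, Nat.factorial_succ]
    congr 1
    have : (n.factorial : ℚ) ≠ 0 := by exact_mod_cast n.factorial_ne_zero
    have : (n + 1 : ℚ) ≠ 0 := by positivity
    push_cast
    field_simp
    ring
  have hmul : ∀ a b, E (a * b) = E a * E b := fun a b => by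
    ext n
    induction n generalizing a b with
    | zero => simp [E]
    | succ n ih =>
      have h1 : PowerSeries.coeff n (d⁄dX B (E (a * b)))
          = PowerSeries.coeff n (d⁄dX B (E a * E b)) := by
        rw [Derivation.leibniz, hder, hder, hder, Derivation.leibniz, hadd]
        simp only [smul_eq_mul, map_add, PowerSeries.coeff_smul, mul_smul_comm, ih, smul_add]
      rw [PowerSeries.coeff_derivative, PowerSeries.coeff_derivative] at h1
      have h : (n + 1 : B) = algebraMap ℚ B (n + 1) := by simp
      have hu : IsUnit (n + 1 : B) := by
        rw [h]
        exact (IsUnit.mk0 (n + 1 : ℚ) (by positivity)).map (algebraMap ℚ B)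
      exact hu.mul_right_cancel h1
  { toFun := E
    map_one' := by
      ext n
      cases n with
      | zero => simp [E]
      | succ n => simp [E, Function.iterate_succ_apply, PowerSeries.coeff_one]
    map_mul' := hmul
    map_zero' := by ext n; simp [E]
    map_add' := hadd }

lemma coeff_expSeries {A B : Type*} [CommRing A] [CommRing B] [Algebra ℚ B] (φ : A →+* B)
    (δ : Derivation ℤ A A) (ε : ℚ) (a : A) (n : ℕ) :
    PowerSeries.coeff n (expSeries φ δ ε a) = (ε ^ n * (n.factorial : ℚ)⁻¹) • φ (δ^[n] a) := by
  simp [expSeries]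

open PowerSeries in
lemma derivative_expSeries {A B : Type*} [CommRing A] [CommRing B] [Algebra ℚ B] (φ : A →+* B)
    (δ : Derivation ℤ A A) (ε : ℚ) (a : A) :
    d⁄dX B (expSeries φ δ ε a) = ε • expSeries φ δ ε (δ a) := by
  ext n
  rw [PowerSeries.coeff_derivative, PowerSeries.coeff_smul, coeff_expSeries, coeff_expSeries]
  simp only [Function.iterate_succ_apply, smul_smul]
  have h : (n + 1 : B) = algebraMap ℚ B (n + 1) := by simp
  rw [h, mul_comm, ← Algebra.smul_def, smul_smul, Nat.factorial_succ]
  congr 1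
  have : (n.factorial : ℚ) ≠ 0 := by exact_mod_cast n.factorial_ne_zero
  have : (n + 1 : ℚ) ≠ 0 := by positivity
  push_cast
  field_simp
  ring

lemma iterate_zero_of_le {A : Type*} [CommRing A] (δ : Derivation ℤ A A) {a : A} {m n : ℕ}
    (hmn : m ≤ n) (h : δ^[m] a = 0) : δ^[n] a = 0 := by
  obtain ⟨k, rfl⟩ := Nat.exists_eq_add_of_le' hmn
  rw [Function.iterate_add_apply, h, iterate_map_zero]

/-- If `δ` is nilpotent on `a`, the exponential series of `a` is a polynomial. -/
lemma exists_poly_expSeries {A B : Type*} [CommRing A] [CommRing B] [Algebra ℚ B] (φ : A →+* B)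
    (δ : Derivation ℤ A A) (ε : ℚ) {a : A} (h : ∃ n, δ^[n] a = 0) :
    ∃ p : Polynomial B, (p : PowerSeries B) = expSeries φ δ ε a := by
  obtain ⟨m, h⟩ := h
  refine ⟨PowerSeries.trunc m (expSeries φ δ ε a), ?_⟩
  ext n
  rw [Polynomial.coeff_coe, PowerSeries.coeff_trunc]
  split_ifs with hn
  · rfl
  · rw [coeff_expSeries, iterate_zero_of_le δ (not_lt.1 hn) h]; simp

section ev
variable {B Λ : Type*} [CommRing B] [NormedRing Λ] [NormedAlgebra ℂ Λ]

/-- Evaluation of a polynomial over `B` at the scalar `u`, its coefficients being sent to the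
complex (not necessarily commutative) algebra `Λ` by `ψ`. -/
noncomputable def ev (ψ : B →+* Λ) (u : ℂ) : Polynomial B →+* Λ :=
  Polynomial.eval₂RingHom' ψ (algebraMap ℂ Λ u) fun _ => (Algebra.commutes u _).symm

lemma ev_C (ψ : B →+* Λ) (u : ℂ) (b : B) : ev ψ u (Polynomial.C b) = ψ b := by
  simp [ev, Polynomial.eval₂RingHom']

lemma ev_monomial (ψ : B →+* Λ) (u : ℂ) (n : ℕ) (b : B) :
    ev ψ u (Polynomial.monomial n b) = u ^ n • ψ b := by
  simp [ev, Polynomial.eval₂RingHom', Polynomial.eval₂_monomial, Algebra.smul_def,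
    ← map_pow, Algebra.commutes]

lemma ev_zero (ψ : B →+* Λ) (p : Polynomial B) : ev ψ 0 p = ψ (p.coeff 0) := by
  induction p using Polynomial.induction_on' with
  | add p q hp hq => simp [hp, hq]
  | monomial n b => cases n <;> simp [ev_monomial, ev_C]

lemma hasDerivAt_ev (ψ : B →+* Λ) (p : Polynomial B) (u : ℂ) :
    HasDerivAt (fun u => ev ψ u p) (ev ψ u (Polynomial.derivative p)) u := by
  induction p using Polynomial.induction_on' with
  | add p q hp hq =>
    simp only [map_add]
    exact hp.add hq
  | monomial n b =>
    simp only [ev_monomial, Polynomial.derivative_monomial]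
    have h := (hasDerivAt_pow n u).smul_const (ψ b)
    have e : ((n : ℂ) * u ^ (n - 1)) • ψ b = u ^ (n - 1) • ψ (b * (n : B)) := by
      rw [map_mul, map_natCast, mul_comm (n : ℂ), mul_smul, ← nsmul_eq_mul',
        Nat.cast_smul_eq_nsmul]
    rw [e] at h
    exact h

lemma iteratedDeriv_ev (ψ : B →+* Λ) (p : Polynomial B) (n : ℕ) :
    iteratedDeriv n (fun u => ev ψ u p) = fun u => ev ψ u (Polynomial.derivative^[n] p) := by
  induction n generalizing p with
  | zero => simp
  | succ n ih =>
    rw [iteratedDeriv_succ', Function.iterate_succ_apply, ← ih]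
    congr 1
    ext u
    exact (hasDerivAt_ev ψ p u).deriv

/-- Cauchy's estimate for the coefficients of `u ↦ ev ψ u p`. -/
lemma cauchy_ev [CompleteSpace Λ] (ψ : B →+* Λ) (p : Polynomial B) (n : ℕ) {ρ C : ℝ} (hρ : 0 < ρ)
    (h : ∀ u : ℂ, ‖u‖ = ρ → ‖ev ψ u p‖ ≤ C) : ‖ψ (p.coeff n)‖ ≤ C / ρ ^ n := by
  have hd : Differentiable ℂ (fun u => ev ψ u p) := fun u =>
    (hasDerivAt_ev ψ p u).differentiableAt
  have := Complex.norm_iteratedDeriv_le_of_forall_mem_sphere_norm_le (c := 0) n hρ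
    hd.diffContOnCl (C := C) (fun z hz => h z (by simpa using hz))
  rw [iteratedDeriv_ev] at this
  simp only [ev_zero, Polynomial.coeff_iterate_derivative, zero_add, Nat.descFactorial_self,
    map_nsmul] at this
  rw [← Nat.cast_smul_eq_nsmul ℂ, norm_smul, Complex.norm_natCast, mul_div_assoc] at this
  exact le_of_mul_le_mul_left this (by exact_mod_cast n.factorial_pos)

/-- For an element `r` of the subring generated by the `b i`, the function `u ↦ ev ψ u (E r)` is a
fixed smooth function (a noncommutative polynomial) of the functions `u ↦ ev ψ u (E (b i))`,
independent of the homomorphism `E`. -/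
lemma rep_fun {A ι : Type*} [CommRing A] [Fintype ι] (ψ : B →+* Λ) (b : ι → A) {r : A}
    (hr : r ∈ Algebra.adjoin ℤ (Set.range b)) :
    ∃ Ψ : (ι → Λ) → Λ, ContDiff ℂ 1 Ψ ∧ ∀ (E : A →+* PowerSeries B) (P : ι → Polynomial B),
      (∀ i, (P i : PowerSeries B) = E (b i)) → ∃ p : Polynomial B, (p : PowerSeries B) = E r ∧
        ∀ u, ev ψ u p = Ψ fun i => ev ψ u (P i) := by
  induction hr using Algebra.adjoin_induction with
  | mem x hx =>
    obtain ⟨i, rfl⟩ := hx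
    exact ⟨fun v => v i, contDiff_apply ℂ Λ i, fun E P h => ⟨P i, h i, fun u => rfl⟩⟩
  | algebraMap m =>
    refine ⟨fun _ => (m : Λ), contDiff_const, fun E P h => ⟨(m : Polynomial B), ?_, fun u => ?_⟩⟩
    · have : ((m : Polynomial B) : PowerSeries B) = (m : PowerSeries B) :=
        map_intCast (Polynomial.coeToPowerSeries.ringHom (R := B)) m
      simp [this]
    · simp
  | add x y _ _ hx hy =>
    obtain ⟨Ψ, hΨ, h⟩ := hx
    obtain ⟨Ψ', hΨ', h'⟩ := hy
    refine ⟨fun v => Ψ v + Ψ' v, hΨ.add hΨ', fun E P hP => ?_⟩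
    obtain ⟨p, hp, hpe⟩ := h E P hP
    obtain ⟨p', hp', hpe'⟩ := h' E P hP
    exact ⟨p + p', by simp [hp, hp'], fun u => by simp [hpe, hpe']⟩
  | mul x y _ _ hx hy =>
    obtain ⟨Ψ, hΨ, h⟩ := hx
    obtain ⟨Ψ', hΨ', h'⟩ := hy
    refine ⟨fun v => Ψ v * Ψ' v, hΨ.mul hΨ', fun E P hP => ?_⟩
    obtain ⟨p, hp, hpe⟩ := h E P hP
    obtain ⟨p', hp', hpe'⟩ := h' E P hP
    exact ⟨p * p', by simp [hp, hp'], fun u => by simp [hpe, hpe']⟩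

end ev

/-! ### First-order dependence on the perturbation -/

/-- Expansion of `(q d₁ + e)ⁿ b` in powers of `q`, where `e = [d₁, d₂]`. The coefficient of
`q ^ (n - 1)` telescopes, because `∑ d₁ⁱ e d₁ʲ` over `i + j = n - 1` is `d₁ⁿ d₂ - d₂ d₁ⁿ`. -/
lemma iterate_smul_add {A : Type*} [CommRing A] (d₁ d₂ e : Derivation ℤ A A)
    (he : ∀ a, e a = d₁ (d₂ a) - d₂ (d₁ a)) (b : A) (n : ℕ) :
    ∃ c : ℕ → A, c 0 = d₁^[n] b ∧ c 1 = d₁^[n] (d₂ b) - d₂ (d₁^[n] b) ∧ (∀ j, n < j → c j = 0) ∧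
      ∀ q : ℕ, (q • d₁ + e)^[n] b = ∑ j ∈ Finset.range (n + 1), q ^ (n - j) • c j := by
  induction n with
  | zero => exact ⟨fun j => if j = 0 then b else 0, by simp, by simp, fun j hj => by simp; omega,
      by simp⟩
  | succ n ih =>
    obtain ⟨c, h0, h1, hc, hs⟩ := ih
    refine ⟨fun j => j.casesOn (d₁ (c 0)) fun i => d₁ (c (i + 1)) + e (c i), ?_, ?_, ?_, ?_⟩
    · simp [h0, Function.iterate_succ_apply']
    · simp [h0, h1, he, Function.iterate_succ_apply']
    · rintro (_ | j) hj
      · omega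
      · simp [hc (j + 1) (by omega), hc j (by omega)]
    · intro q
      rw [Function.iterate_succ_apply', hs, map_sum, Finset.sum_range_succ' _ (n + 1)]
      have hq : ∀ j ∈ Finset.range (n + 1), (q • d₁ + e) (q ^ (n - j) • c j)
          = q ^ (n + 1 - j) • d₁ (c j) + q ^ (n - j) • e (c j) := by
        intro j hj
        have : n + 1 - j = (n - j) + 1 := by have := Finset.mem_range.1 hj; omega
        rw [map_nsmul, this, pow_succ, mul_smul]
        simp [smul_add]
      rw [Finset.sum_congr rfl hq, Finset.sum_add_distrib]
      have h2 : ∑ j ∈ Finset.range (n + 1), q ^ (n + 1 - j) • d₁ (c j)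
          = ∑ j ∈ Finset.range (n + 1), q ^ (n - j) • d₁ (c (j + 1)) + q ^ (n + 1) • d₁ (c 0) := by
        have h3 := Finset.sum_range_succ (fun j => q ^ (n + 1 - j) • d₁ (c j)) (n + 1)
        rw [Finset.sum_range_succ'] at h3
        simp only [hc (n + 1) (by omega), map_zero, smul_zero, add_zero] at h3
        rw [← h3]
        simp
      rw [h2]
      simp only [Nat.add_sub_add_right, smul_add, Finset.sum_add_distrib, Nat.sub_zero]
      exact add_right_comm _ _ _

lemma map_ratCast_smul' {B Λ : Type*} [CommRing B] [Algebra ℚ B] [NormedRing Λ]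
    [NormedAlgebra ℂ Λ] (ψ : B →+* Λ) (x : ℚ) (b : B) : ψ (x • b) = (x : ℂ) • ψ b := by
  have := map_ratCast_smul ψ ℚ ℂ x b
  simpa using this

/-- Passage to the limit `q → ∞` in an estimate `O(1/q)` for the difference of the exponential series
of `d₁ + q⁻¹ [d₁, d₂]` and of `d₁`. -/
lemma norm_coeff_le_of_forall {A B Λ : Type*} [CommRing A] [CommRing B] [Algebra ℚ B]
    [NormedRing Λ] [NormedAlgebra ℂ Λ] (φ : A →+* B) (ψ : B →+* Λ) (d₁ d₂ e : Derivation ℤ A A)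
    (he : ∀ a, e a = d₁ (d₂ a) - d₂ (d₁ a)) (b : A) (n : ℕ) {C ρ : ℝ} {q₀ : ℕ}
    (h : ∀ q ≥ q₀, ‖ψ (PowerSeries.coeff n
      (expSeries φ (q • d₁ + e) (q : ℚ)⁻¹ b - expSeries φ d₁ 1 b))‖ ≤ C / q / ρ ^ n) :
    ‖ψ ((n.factorial : ℚ)⁻¹ • φ (d₁^[n] (d₂ b) - d₂ (d₁^[n] b)))‖ ≤ C / ρ ^ n := by
  obtain ⟨c, h0, h1, hc, hs⟩ := iterate_smul_add d₁ d₂ e he b n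
  set z : ℕ → Λ := fun j => ψ ((n.factorial : ℚ)⁻¹ • φ (c (j + 1))) with hz
  have key : ∀ q : ℕ, 1 ≤ q → (q : ℂ) • ψ (PowerSeries.coeff n
      (expSeries φ (q • d₁ + e) (q : ℚ)⁻¹ b - expSeries φ d₁ 1 b))
      = ∑ j ∈ Finset.range (n + 1), ((q : ℂ)⁻¹ ^ j) • z j := by
    intro q hq
    have hq' : (q : ℚ) ≠ 0 := by exact_mod_cast (by omega : q ≠ 0)
    have hr : PowerSeries.coeff n
      (expSeries φ (q • d₁ + e) (q : ℚ)⁻¹ b - expSeries φ d₁ 1 b) =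
      ∑ j ∈ Finset.range (n + 1), ((q : ℚ)⁻¹ ^ (j + 1)) • (n.factorial : ℚ)⁻¹ • φ (c (j + 1)) := by
      rw [map_sub, coeff_expSeries, coeff_expSeries, hs, map_sum, Finset.smul_sum,
        Finset.sum_range_succ', Finset.sum_range_succ, hc (n + 1) (by omega), h0]
      simp only [map_zero, smul_zero, add_zero, one_pow, one_mul, Nat.sub_zero]
      have : ((q : ℚ)⁻¹ ^ n * (n.factorial : ℚ)⁻¹) • φ (q ^ n • d₁^[n] b)
          = (n.factorial : ℚ)⁻¹ • φ (d₁^[n] b) := by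
        rw [map_nsmul, ← Nat.cast_smul_eq_nsmul ℚ, smul_smul]
        congr 1
        push_cast
        rw [inv_pow]
        field_simp
      rw [this, add_sub_cancel_right]
      refine Finset.sum_congr rfl fun j hj => ?_
      rw [map_nsmul, ← Nat.cast_smul_eq_nsmul ℚ, smul_smul, smul_smul]
      congr 1
      obtain ⟨k, rfl⟩ := Nat.exists_eq_add_of_le (Finset.mem_range.1 hj)
      have : j.succ + k - (j + 1) = k := by omega
      rw [this]
      push_cast
      rw [Nat.succ_eq_add_one, pow_add, inv_pow, inv_pow]
      field_simp
    rw [hr, map_sum, Finset.smul_sum]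
    refine Finset.sum_congr rfl fun j hj => ?_
    rw [map_ratCast_smul', smul_smul, pow_succ]
    congr 1
    have hq'' : (q : ℂ) ≠ 0 := by exact_mod_cast hq'
    push_cast
    field_simp
  have hlim : Filter.Tendsto (fun q : ℕ => ∑ j ∈ Finset.range (n + 1), ((q : ℂ)⁻¹ ^ j) • z j)
      Filter.atTop (nhds (z 0)) := by
    have h2 : Filter.Tendsto (fun q : ℕ => ∑ j ∈ Finset.range (n + 1), ((q : ℂ)⁻¹ ^ j) • z j)
      Filter.atTop (nhds (∑ j ∈ Finset.range (n + 1), ((0 : ℂ) ^ j) • z j)) :=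
      tendsto_finsetSum _ fun j _ =>
        ((tendsto_inv_atTop_nhds_zero_nat (𝕜 := ℂ)).pow j).smul_const (z j)
    have h3 : ∑ j ∈ Finset.range (n + 1), ((0 : ℂ) ^ j) • z j = z 0 := by
      rw [Finset.sum_range_succ']; simp
    rwa [h3] at h2
  have hz0 : z 0 = ψ ((n.factorial : ℚ)⁻¹ • φ (d₁^[n] (d₂ b) - d₂ (d₁^[n] b))) := by
    simp only [hz, zero_add, h1]
  rw [← hz0]
  refine le_of_tendsto hlim.norm ?_
  filter_upwards [Filter.eventually_ge_atTop (max q₀ 1)] with q hq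
  have hq1 : 1 ≤ q := (le_max_right _ _).trans hq
  have hqpos : (0 : ℝ) < q := by exact_mod_cast hq1
  rw [← key q hq1, norm_smul, Complex.norm_natCast]
  calc (q : ℝ) * _ ≤ q * (C / q / ρ ^ n) := by
        gcongr
        exact h q ((le_max_left _ _).trans hq)
    _ = C / ρ ^ n := by field_simp

/-! ### Superexponential decay -/

section decay
variable {A B Λ ι : Type*} [CommRing A] [CommRing B] [Algebra ℚ B] [NormedRing Λ]
  [NormedAlgebra ℂ Λ] [Fintype ι]

/-- The rational vector fields governing the evolution of the generators: the function `σ` represents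
`s`, and the derivatives of the generators are given by the fields `v ↦ σ(v)⁻ᵏ F(v)` for `d` and
`v ↦ σ(v)⁻ᵏ G(v)` for `e`, wherever `σ` is invertible. None of them depends on the homomorphism
`E`, so the same fields serve for all exponential series. -/
lemma exists_field (ψ : B →+* Λ) (b : ι → A) {s : A}
    (hs : s ∈ Algebra.adjoin ℤ (Set.range b))
    (hden : ∀ a, ∃ k, s ^ k * a ∈ Algebra.adjoin ℤ (Set.range b)) (d e : A → A) :
    ∃ (σ : (ι → Λ) → Λ) (k : ι → ℕ) (F G : ι → (ι → Λ) → Λ), ContDiff ℂ 1 σ ∧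
      (∀ i, ContDiff ℂ 1 (F i)) ∧ (∀ i, ContDiff ℂ 1 (G i)) ∧
      ∀ (E : A →+* PowerSeries B) (P : ι → Polynomial B) (ε : ℚ),
        (∀ i, (P i : PowerSeries B) = E (b i)) →
        (∃ p : Polynomial B, (p : PowerSeries B) = E s ∧
          ∀ u, ev ψ u p = σ fun i => ev ψ u (P i)) ∧
        ((∀ i, PowerSeries.derivative B (E (b i)) = E (d (b i)) + ε • E (e (b i))) →
          ∀ u, IsUnit (σ fun i => ev ψ u (P i)) → ∀ i, ev ψ u (Polynomial.derivative (P i))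
            = Ring.inverse (σ fun i => ev ψ u (P i)) ^ k i * F i (fun i => ev ψ u (P i)) +
              (ε : ℂ) • (Ring.inverse (σ fun i => ev ψ u (P i)) ^ k i *
                G i (fun i => ev ψ u (P i)))) := by
  have hk : ∀ i, ∃ k, s ^ k * d (b i) ∈ Algebra.adjoin ℤ (Set.range b) ∧
      s ^ k * e (b i) ∈ Algebra.adjoin ℤ (Set.range b) := by
    intro i
    obtain ⟨k, hk⟩ := hden (d (b i))
    obtain ⟨l, hl⟩ := hden (e (b i))
    refine ⟨l + k, ?_, ?_⟩
    · rw [pow_add, mul_assoc]; exact mul_mem (pow_mem hs l) hk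
    · rw [pow_add, mul_comm (s ^ l), mul_assoc]; exact mul_mem (pow_mem hs k) hl
  choose k hk₁ hk₂ using hk
  obtain ⟨σ, hσ, hσr⟩ := rep_fun ψ b hs
  choose F hF hFr using fun i => rep_fun ψ b (hk₁ i)
  choose G hG hGr using fun i => rep_fun ψ b (hk₂ i)
  refine ⟨σ, k, F, G, hσ, hF, hG, fun E P ε hP => ⟨hσr E P hP, fun hE u hu i => ?_⟩⟩
  obtain ⟨p, hp, hpe⟩ := hσr E P hP
  obtain ⟨f, hf, hfe⟩ := hFr i E P hP
  obtain ⟨g, hg, hge⟩ := hGr i E P hP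
  have key : p ^ k i * Polynomial.derivative (P i) = f + ε • g := by
    apply Polynomial.coe_injective B
    have h1 : ((Polynomial.derivative (P i) : Polynomial B) : PowerSeries B)
        = PowerSeries.derivative B (E (b i)) := by
      rw [← hP i, PowerSeries.derivative_coe]
    have h2 : ((ε • g : Polynomial B) : PowerSeries B) = ε • E (s ^ k i * e (b i)) := by
      rw [← hg]; ext n; simp
    rw [Polynomial.coe_mul, Polynomial.coe_pow, Polynomial.coe_add, h1, h2, hE, hf, hp, map_mul,
      map_mul, map_pow, mul_add, mul_smul_comm]
  have h3 := congrArg (ev ψ u) key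
  rw [map_mul, map_pow, map_add, map_ratCast_smul', hpe, hfe, hge] at h3
  rw [← mul_smul_comm, ← mul_add, ← h3, ← mul_assoc]
  obtain ⟨w, hw⟩ := hu
  rw [← hw, Ring.inverse_unit, ← Units.val_pow_eq_pow_val, ← Units.val_pow_eq_pow_val,
    ← Units.val_mul, inv_pow, inv_mul_cancel, Units.val_one, one_mul]

/-- A finite set `Z` not containing `0` is avoided by the ray through some `v` of large norm and by
the circle of radius `‖v‖`. -/
lemma exists_ray_circle {Z : Set ℂ} (hZ : Z.Finite) (h0 : (0 : ℂ) ∉ Z) {ρ : ℝ} (hρ : 0 < ρ) :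
    ∃ v : ℂ, ρ ≤ ‖v‖ ∧ (∀ z ∈ Z, ‖z‖ ≠ ‖v‖) ∧ ∀ t : ℝ, 0 ≤ t → (t : ℂ) * v ∉ Z := by
  obtain ⟨r, hr, hrZ⟩ := ((Set.Ici_infinite ρ).sdiff (hZ.image norm)).nonempty
  have hinf : (Metric.sphere (0 : ℂ) 1).Infinite := by
    refine (isPreconnected_sphere (by simp) 0 1).infinite_of_nontrivial
      ⟨1, by simp, -1, by simp, ?_⟩
    norm_num
  obtain ⟨w, hw, hwZ⟩ := (hinf.sdiff (hZ.image fun z => z / (‖z‖ : ℂ))).nonempty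
  have hr0 : 0 < r := hρ.trans_le hr
  have hw1 : ‖w‖ = 1 := by simpa using hw
  have hn : ‖(r : ℂ) * w‖ = r := by
    rw [norm_mul, hw1, mul_one, Complex.norm_real, Real.norm_of_nonneg hr0.le]
  refine ⟨r * w, by rw [hn]; exact hr, fun z hz h => hrZ ⟨z, hz, by rw [h, hn]⟩, fun t ht h => ?_⟩
  apply hwZ
  refine ⟨_, h, ?_⟩
  have ht0 : t ≠ 0 := by rintro rfl; simp at h; exact h0 h
  have hn' : ‖(t : ℂ) * (r * w)‖ = t * r := by
    rw [norm_mul, hn, Complex.norm_real, Real.norm_of_nonneg ht]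
  have hr' : (r : ℂ) ≠ 0 := by exact_mod_cast hr0.ne'
  have ht' : (t : ℂ) ≠ 0 := by exact_mod_cast ht0
  simp only [hn']
  push_cast
  field_simp

lemma exists_exp_param {v u : ℂ} (hv : v ≠ 0) (h : ‖u‖ = ‖v‖) :
    ∃ t ∈ Set.Icc (0 : ℝ) 1, v * Complex.exp (2 * Real.pi * Complex.I * t) = u := by
  have hpi := Real.pi_pos
  refine ⟨(Complex.arg (-(u / v)) + Real.pi) / (2 * Real.pi), ⟨?_, ?_⟩, ?_⟩
  · have := Complex.neg_pi_lt_arg (-(u / v))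
    apply div_nonneg <;> linarith
  · rw [div_le_one (by positivity)]
    have := Complex.arg_le_pi (-(u / v))
    linarith
  · have h1 : (2 * Real.pi * Complex.I * (((Complex.arg (-(u / v)) + Real.pi) / (2 * Real.pi) : ℝ)) : ℂ)
        = Complex.arg (-(u / v)) * Complex.I + Real.pi * Complex.I := by
      have : (Real.pi : ℂ) ≠ 0 := by exact_mod_cast hpi.ne'
      push_cast
      field_simp
    have hn : ‖-(u / v)‖ = 1 := by
      rw [norm_neg, norm_div, h, div_self (norm_ne_zero_iff.2 hv)]
    have h2 := Complex.norm_mul_exp_arg_mul_I (-(u / v))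
    rw [hn, Complex.ofReal_one, one_mul] at h2
    rw [h1, Complex.exp_add, h2, Complex.exp_pi_mul_I]
    field_simp

/-- In a Banach algebra representation `ψ` of `B`, the elements `(d₁ⁿ (d₂ b) - d₂ (d₁ⁿ b)) / n!` decay
faster than any geometric sequence. The hypothesis `hfin` holds for representations by matrices. -/
lemma decay [CompleteSpace Λ] (φ : A →+* B) (ψ : B →+* Λ)
    (hfin : ∀ P : Polynomial B, IsUnit (P.coeff 0) → {u | ¬ IsUnit (ev ψ u P)}.Finite)
    (b : ι → A) {s : A} (hs : s ∈ Algebra.adjoin ℤ (Set.range b)) (hsu : IsUnit s)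
    (hden : ∀ a, ∃ k, s ^ k * a ∈ Algebra.adjoin ℤ (Set.range b))
    (d₁ d₂ e : Derivation ℤ A A) (he : ∀ a, e a = d₁ (d₂ a) - d₂ (d₁ a))
    (hnil : ∀ i, ∃ n, d₁^[n] (b i) = 0) (hnilq : ∀ (q : ℕ) i, ∃ n, (q • d₁ + e)^[n] (b i) = 0)
    (i₀ : ι) (ρ : ℝ) (hρ : 0 < ρ) :
    ∃ C : ℝ, ∀ n : ℕ,
      ‖ψ ((n.factorial : ℚ)⁻¹ • φ (d₁^[n] (d₂ (b i₀)) - d₂ (d₁^[n] (b i₀))))‖ ≤ C / ρ ^ n := by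
  obtain ⟨σ, k, F, G, hσ, hF, hG, hrep⟩ := exists_field ψ b hs hden d₁ e
  choose P hP using fun i => exists_poly_expSeries φ d₁ 1 (hnil i)
  choose Q hQ using fun q : ℕ => fun i =>
    exists_poly_expSeries φ (q • d₁ + e) (q : ℚ)⁻¹ (hnilq q i)
  set y : ℂ → ι → Λ := fun u i => ev ψ u (P i) with hy
  set Y : ℕ → ℂ → ι → Λ := fun q u i => ev ψ u (Q q i) with hY
  have hyd : ∀ u, HasDerivAt y (fun i => ev ψ u (Polynomial.derivative (P i))) u := fun u =>
    hasDerivAt_pi.2 fun i => hasDerivAt_ev ψ (P i) u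
  have hYd : ∀ q u, HasDerivAt (Y q) (fun i => ev ψ u (Polynomial.derivative (Q q i))) u :=
    fun q u => hasDerivAt_pi.2 fun i => hasDerivAt_ev ψ (Q q i) u
  set U : Set (ι → Λ) := {v | IsUnit (σ v)} with hU
  have hUo : IsOpen U := Units.isOpen.preimage hσ.continuous
  have hinv : ∀ v ∈ U, ContDiffAt ℂ 1 (fun v => Ring.inverse (σ v)) v := by
    rintro v ⟨w, hw⟩
    have h1 : ContDiffAt ℂ 1 Ring.inverse (σ v) := by
      rw [← hw]; exact contDiffAt_ringInverse ℂ w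
    exact h1.comp v hσ.contDiffAt
  have hvec : ∀ H : ι → (ι → Λ) → Λ, (∀ i, ContDiff ℂ 1 (H i)) → ∀ v ∈ U,
      ContDiffAt ℂ 1 (fun v i => Ring.inverse (σ v) ^ k i * H i v) v := fun H hH v hv =>
    contDiffAt_pi.2 fun i => ((hinv v hv).pow (k i)).mul (hH i).contDiffAt
  obtain ⟨⟨p, hp, hpe⟩, hode⟩ := hrep (expSeries φ d₁ 1) P 0 hP
  have hbad : {u | ¬ IsUnit (ev ψ u p)}.Finite := by
    apply hfin
    have : p.coeff 0 = φ s := by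
      rw [← Polynomial.coeff_coe, hp, coeff_expSeries]; simp
    rw [this]; exact hsu.map φ
  have h0bad : (0 : ℂ) ∉ {u | ¬ IsUnit (ev ψ u p)} := by
    have : p.coeff 0 = φ s := by
      rw [← Polynomial.coeff_coe, hp, coeff_expSeries]; simp
    simp only [Set.mem_ofPred_eq, not_not, ev_zero, this]
    exact (hsu.map φ).map ψ
  obtain ⟨v, hv, hvc, hvr⟩ := exists_ray_circle hbad h0bad hρ
  have hgood : ∀ u, u ∉ {u | ¬ IsUnit (ev ψ u p)} → y u ∈ U := by
    intro u hu
    simp only [Set.mem_ofPred_eq, not_not] at hu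
    rw [hpe] at hu
    exact hu
  have hyode : ∀ u, y u ∈ U → deriv y u = (fun v i => Ring.inverse (σ v) ^ k i * F i v) (y u) := by
    intro u hu
    rw [(hyd u).deriv]
    funext i
    have := hode (fun i => by rw [derivative_expSeries]; simp) u hu i
    simpa using this
  have hYode : ∀ q u, 1 ≤ q → Y q u ∈ U →
      deriv (Y q) u = (fun v i => Ring.inverse (σ v) ^ k i * F i v) (Y q u)
        + (q : ℂ)⁻¹ • (fun v i => Ring.inverse (σ v) ^ k i * G i v) (Y q u) := by
    intro q u hq hu
    rw [(hYd q u).deriv]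
    funext i
    have hq' : (q : ℚ) ≠ 0 := by exact_mod_cast (by omega : q ≠ 0)
    have := (hrep (expSeries φ (q • d₁ + e) (q : ℚ)⁻¹) (Q q) (q : ℚ)⁻¹ (hQ q)).2 (fun i => by
      rw [derivative_expSeries]
      have h1 : (q • d₁ + e) (b i) = q • d₁ (b i) + e (b i) := by simp
      rw [h1, map_add, map_nsmul, smul_add, ← Nat.cast_smul_eq_nsmul ℚ, smul_smul,
        inv_mul_cancel₀ hq', one_smul]) u hu i
    rw [this]
    simp [hY]
  have hstep := fun (γ γ' : ℝ → ℂ) => ode_compare (γ := γ) (γ' := γ') hUo (hvec F hF)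
    (fun v hv => (hvec G hG v hv).continuousAt)
    (fun u => (hyd u).differentiableAt) (fun q u => (hYd q u).differentiableAt) hyode hYode
  have h0 : ∀ q, Y q 0 = y 0 := by
    intro q
    funext i
    simp only [hY, hy, ev_zero, ← Polynomial.coeff_coe, hP, hQ, coeff_expSeries]
    simp
  -- Along the segment from `0` to `v`, then around the circle of radius `‖v‖`.
  obtain ⟨C₁, q₁, h1⟩ := hstep (fun t => (t : ℂ) * v) (fun _ => v)
    (fun t => by simpa using (Complex.ofRealCLM.hasDerivAt (x := t)).mul_const v)
    continuous_const (fun t ht => hgood _ (hvr t ht.1))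
    ⟨0, 0, fun q _ => by simp [h0]⟩
  have hvnorm : ∀ t : ℝ, ‖v * Complex.exp (2 * Real.pi * Complex.I * t)‖ = ‖v‖ := by
    intro t
    have : (2 * Real.pi * Complex.I * t : ℂ) = ((2 * Real.pi * t : ℝ) : ℂ) * Complex.I := by
      push_cast; ring
    rw [norm_mul, this, Complex.norm_exp_ofReal_mul_I, mul_one]
  obtain ⟨C, q₀, h2⟩ := hstep (fun t => v * Complex.exp (2 * Real.pi * Complex.I * t))
    (fun t => v * (Complex.exp (2 * Real.pi * Complex.I * t) * (2 * Real.pi * Complex.I * 1)))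
    (fun t => (((Complex.ofRealCLM.hasDerivAt (x := t)).const_mul
      (2 * Real.pi * Complex.I)).cexp).const_mul v)
    (by fun_prop)
    (fun t ht => hgood _ fun hb => hvc _ hb (hvnorm t))
    ⟨C₁, q₁, fun q hq => by simpa using h1 q hq 1 (by simp)⟩
  have hv0 : 0 < ‖v‖ := hρ.trans_le hv
  have hcoef : ∀ n, ∀ q ≥ q₀, ‖ψ (PowerSeries.coeff n
      (expSeries φ (q • d₁ + e) (q : ℚ)⁻¹ (b i₀) - expSeries φ d₁ 1 (b i₀)))‖
        ≤ C / q / ‖v‖ ^ n := by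
    intro n q hq
    rw [← hP, ← hQ, ← Polynomial.coe_sub, Polynomial.coeff_coe]
    refine cauchy_ev ψ _ n hv0 fun u hu => ?_
    obtain ⟨t, ht, rfl⟩ := exists_exp_param (norm_pos_iff.1 hv0) hu
    rw [map_sub]
    exact (norm_le_pi_norm (Y q _ - y _) i₀).trans (h2 q hq t ht)
  refine ⟨C, fun n => ?_⟩
  have hC : 0 ≤ C := by
    have := (norm_nonneg _).trans (norm_coeff_le_of_forall φ ψ d₁ d₂ e he (b i₀) 0 (hcoef 0))
    simpa using this
  refine (norm_coeff_le_of_forall φ ψ d₁ d₂ e he (b i₀) n (hcoef n)).trans ?_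
  gcongr

end decay

/-! ### Linear recurrences over finitely generated algebras -/

lemma finite_quotient_pow {B : Type*} [CommRing B] [Algebra ℚ B] [Algebra.FiniteType ℚ B]
    (𝔪 : Ideal B) [h𝔪 : 𝔪.IsMaximal] (k : ℕ) : Module.Finite ℚ (B ⧸ 𝔪 ^ k) := by
  rw [Module.finite_iff_krullDimLE_zero]
  refine Ring.KrullDimLE.mk₀ fun I hI => ?_
  have hc : (I.comap (Ideal.Quotient.mk (𝔪 ^ k))).IsPrime := hI.comap _
  have hle : 𝔪 ≤ I.comap (Ideal.Quotient.mk (𝔪 ^ k)) := by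
    refine hc.le_of_pow_le (n := k) fun x hx => ?_
    rw [Ideal.mem_comap, Ideal.Quotient.eq_zero_iff_mem.2 hx]
    exact I.zero_mem
  have heq := h𝔪.eq_of_le hc.ne_top hle
  have hm : (I.comap (Ideal.Quotient.mk (𝔪 ^ k))).IsMaximal := heq ▸ h𝔪
  rw [← Ideal.map_comap_of_surjective _ Ideal.Quotient.mk_surjective I]
  exact (Ideal.map_eq_top_or_isMaximal_of_surjective _ Ideal.Quotient.mk_surjective hm).resolve_left
    (by rw [Ideal.map_comap_of_surjective _ Ideal.Quotient.mk_surjective I]; exact hI.ne_top)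

/-- A linear map which vanishes on the kernel of `f` factors through `f`. -/
lemma exists_functional {U V W : Type*} [AddCommGroup U] [Module ℚ U] [AddCommGroup V] [Module ℚ V]
    [AddCommGroup W] [Module ℚ W] (f : U →ₗ[ℚ] V) (g : U →ₗ[ℚ] W)
    (h : LinearMap.ker f ≤ LinearMap.ker g) : ∃ l : V →ₗ[ℚ] W, ∀ u, l (f u) = g u := by
  obtain ⟨s, hs⟩ := LinearMap.exists_leftInverse_of_injective f.range.subtype
    (LinearMap.ker_eq_bot.2 (Subtype.val_injective))
  refine ⟨(((LinearMap.ker f).liftQ g h).comp f.quotKerEquivRange.symm.toLinearMap).comp s,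
    fun u => ?_⟩
  have h1 : s (f u) = f.rangeRestrict u := LinearMap.congr_fun hs (f.rangeRestrict u)
  have h2 : f.quotKerEquivRange.symm (f.rangeRestrict u) = (LinearMap.ker f).mkQ u := by
    rw [LinearEquiv.symm_apply_eq]; rfl
  simp only [LinearMap.comp_apply, h1, LinearEquiv.coe_coe, h2]
  simp

universe u

/-- If the orbit of `w` under an endomorphism `T` of `Bʳ` decays faster than any geometric sequence in
all finite-dimensional quotients of `B`, then it reaches `0`: the annihilator of `w` in `B[X]`
contains a power of `X`. -/
lemma nilpotent_of_decay {B : Type u} [CommRing B] [Algebra ℚ B] [Algebra.FiniteType ℚ B] {r : ℕ}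
    (T : (Fin r → B) →ₗ[B] (Fin r → B)) (w : Fin r → B)
    (hdecay : ∀ (D : Type u) [CommRing D] [Algebra ℚ D] [Module.Finite ℚ D] (χ : B →ₐ[ℚ] D)
      (l : D →ₗ[ℚ] ℂ) (i : Fin r) (ρ : ℝ), 0 < ρ → ∃ C : ℝ, ∀ n : ℕ,
        ‖l (χ ((T ^ n) w i))‖ ≤ C / ρ ^ n) :
    ∃ N : ℕ, (T ^ N) w = 0 := by
  have hN : IsNoetherianRing B := Algebra.FiniteType.isNoetherianRing ℚ B
  have hJ : IsJacobsonRing B := isJacobsonRing_of_finiteType (A := ℚ)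
  set τ : Polynomial B →ₗ[B] (Fin r → B) :=
    (LinearMap.applyₗ w).comp (Polynomial.aeval T).toLinearMap with hτ
  have hτX : ∀ n, τ (Polynomial.X ^ n) = (T ^ n) w := fun n => by simp [hτ]
  set I : Ideal (Polynomial B) :=
    { carrier := {p | τ p = 0}
      add_mem' := fun {p q} hp hq => by
        simp only [Set.mem_ofPred_eq] at *
        rw [map_add, hp, hq, add_zero]
      zero_mem' := map_zero τ
      smul_mem' := fun p q hq => by
        simp only [Set.mem_ofPred_eq, hτ, LinearMap.comp_apply, AlgHom.toLinearMap_apply,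
          smul_eq_mul, map_mul, LinearMap.applyₗ_apply_apply, Module.End.mul_apply] at *
        rw [hq, map_zero] } with hI
  have hmem : ∀ p, p ∈ I ↔ τ p = 0 := fun p => Iff.rfl
  suffices h : (Polynomial.X : Polynomial B) ∈ I.radical by
    obtain ⟨N, hN⟩ := h
    exact ⟨N, by rw [← hτX, ← hmem]; exact hN⟩
  -- `B[X]` is a Jacobson ring, so it suffices to test on the maximal ideals `𝔫` containing `I`.
  rw [Ideal.radical_eq_jacobson, Ideal.jacobson, Ideal.mem_sInf]
  rintro 𝔫 ⟨hle, hmax⟩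
  let _ : Field (Polynomial B ⧸ 𝔫) := Ideal.Quotient.field 𝔫
  have hft : Algebra.FiniteType ℚ (Polynomial B ⧸ 𝔫) := by
    have : Algebra.FiniteType ℚ (Polynomial B) :=
      Algebra.FiniteType.trans (S := B) inferInstance inferInstance
    exact this.of_surjective (Ideal.Quotient.mkₐ ℚ 𝔫) (Ideal.Quotient.mkₐ_surjective ℚ 𝔫)
  have hfin : Module.Finite ℚ (Polynomial B ⧸ 𝔫) := finite_of_finite_type_of_isJacobsonRing _ _
  set σ : (Polynomial B ⧸ 𝔫) →ₐ[ℚ] ℂ := IsAlgClosed.lift with hσ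
  set 𝔪 : Ideal B := 𝔫.comap Polynomial.C with h𝔪
  have hm : 𝔪.IsMaximal := Polynomial.isMaximal_comap_C_of_isJacobsonRing 𝔫
  obtain ⟨k, hk⟩ := Ideal.exists_pow_inf_eq_pow_smul 𝔪 (LinearMap.range τ)
  have hk1 := hk (k + 1) (by omega)
  rw [Nat.add_sub_cancel_left, pow_one] at hk1
  -- Artin–Rees: the class of `p` modulo `𝔫` depends only on `τ p` modulo `𝔪 ^ (k + 1)`.
  have hker : ∀ p, (∀ i, τ p i ∈ 𝔪 ^ (k + 1)) → p ∈ 𝔫 := by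
    intro p hp
    have h1 : τ p ∈ (𝔪 ^ (k + 1) • ⊤ : Submodule B (Fin r → B)) ⊓ LinearMap.range τ := by
      refine ⟨?_, p, rfl⟩
      rw [← Finset.univ_sum_single (τ p)]
      refine Submodule.sum_mem _ fun i _ => ?_
      have : (Pi.single i (τ p i) : Fin r → B) = τ p i • Pi.single i 1 := by
        rw [← Pi.single_smul, smul_eq_mul, mul_one]
      rw [this]
      exact Submodule.smul_mem_smul (hp i) trivial
    rw [hk1] at h1
    have h2 : τ p ∈ 𝔪 • LinearMap.range τ := Submodule.smul_mono le_rfl inf_le_right h1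
    rw [LinearMap.range_eq_map, ← Submodule.map_smul''] at h2
    obtain ⟨p', hp', hpp⟩ := h2
    have h3 : p' ∈ 𝔫 := by
      refine Submodule.smul_induction_on (p := fun x => x ∈ 𝔫) hp' (fun a ha f _ => ?_)
        fun x y hx hy => 𝔫.add_mem hx hy
      rw [Polynomial.smul_eq_C_mul]
      exact 𝔫.mul_mem_right _ ha
    have h4 : p - p' ∈ 𝔫 := hle ((hmem _).2 (by rw [map_sub, hpp, sub_self]))
    simpa using 𝔫.add_mem h4 h3
  have hD : Module.Finite ℚ (B ⧸ 𝔪 ^ (k + 1)) := finite_quotient_pow 𝔪 (k + 1)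
  set χ : B →ₐ[ℚ] B ⧸ 𝔪 ^ (k + 1) := Ideal.Quotient.mkₐ ℚ (𝔪 ^ (k + 1)) with hχ
  obtain ⟨l, hl⟩ := exists_functional
    (LinearMap.pi fun i : Fin r => χ.toLinearMap.comp
      ((LinearMap.proj (R := ℚ) i).comp (τ.restrictScalars ℚ)))
    (σ.toLinearMap.comp (Ideal.Quotient.mkₐ ℚ 𝔫).toLinearMap) (by
      intro p hp
      rw [LinearMap.mem_ker] at hp ⊢
      have : p ∈ 𝔫 := hker p fun i => by
        have := congrFun hp i
        simpa [hχ, Ideal.Quotient.eq_zero_iff_mem] using this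
      simp [Ideal.Quotient.eq_zero_iff_mem.2 this])
  -- The powers of the image `z` of `X` in `ℂ` are linear functions of the orbit modulo
  -- `𝔪 ^ (k + 1)`, so they decay faster than any geometric sequence, which forces `z = 0`.
  set z : ℂ := σ (Ideal.Quotient.mk 𝔫 Polynomial.X) with hz
  have hzn : ∀ n : ℕ, z ^ n = ∑ i, (l.comp (LinearMap.single ℚ (fun _ : Fin r => B ⧸ 𝔪 ^ (k + 1)) i)) (χ ((T ^ n) w i)) := by
    intro n
    have h1 := hl (Polynomial.X ^ n)
    simp only [LinearMap.comp_apply, AlgHom.toLinearMap_apply, map_pow,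
      Ideal.Quotient.mkₐ_eq_mk] at h1
    rw [hz, ← h1]
    simp only [LinearMap.comp_apply]
    rw [← map_sum]
    congr 1
    funext i
    rw [Finset.sum_apply]
    simp [hτX, Pi.single_apply]
  have hz0 : z = 0 := by
    by_contra hne
    have hpos : 0 < ‖z‖ := norm_pos_iff.2 hne
    choose c hc using fun i => hdecay _ χ (l.comp (LinearMap.single ℚ (fun _ : Fin r => B ⧸ 𝔪 ^ (k + 1)) i)) i (2 / ‖z‖)
      (by positivity)
    have hb : ∀ n : ℕ, (2 : ℝ) ^ n ≤ ∑ i, c i := by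
      intro n
      have h1 : ‖z‖ ^ n ≤ (∑ i, c i) / (2 / ‖z‖) ^ n := by
        rw [← norm_pow, hzn, Finset.sum_div]
        exact (norm_sum_le _ _).trans (Finset.sum_le_sum fun i _ => hc i n)
      rw [le_div_iff₀ (by positivity), ← mul_pow, mul_div_cancel₀ _ hpos.ne'] at h1
      exact h1
    obtain ⟨n, hn⟩ := pow_unbounded_of_one_lt (∑ i, c i) (one_lt_two (α := ℝ))
    exact absurd (hb n) (not_le.2 hn)
  rw [← Ideal.Quotient.eq_zero_iff_mem]
  exact (map_eq_zero σ).1 hz0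

/-! ### Finite-dimensional representations -/

section matrix
attribute [local instance] Matrix.linftyOpNormedRing Matrix.linftyOpNormedAlgebra

/-- The determinant of `ev ψ u P` is a polynomial in `u`, nonzero at `u = 0`. -/
lemma finite_not_isUnit_ev {B : Type*} [CommRing B] {d : ℕ} (ψ : B →+* Matrix (Fin d) (Fin d) ℂ)
    (P : Polynomial B) (hP : IsUnit (P.coeff 0)) : {u | ¬ IsUnit (ev ψ u P)}.Finite := by
  set p : Polynomial ℂ := (matPolyEquiv.symm (P.map ψ)).det with hp
  have hdet : ∀ u, p.eval u = (ev ψ u P).det := by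
    intro u
    rw [hp, eval_det, AlgEquiv.apply_symm_apply, Polynomial.eval_map]
    rfl
  have hp0 : p ≠ 0 := by
    intro h
    have h1 := hdet 0
    rw [h, ev_zero, Polynomial.eval_zero] at h1
    exact ((Matrix.isUnit_iff_isUnit_det _).1 (hP.map ψ)).ne_zero h1.symm
  refine (Polynomial.finite_setOfPred_isRoot hp0).subset fun u hu => ?_
  simp only [Set.mem_ofPred_eq, Matrix.isUnit_iff_isUnit_det, isUnit_iff_ne_zero, not_not] at hu
  rw [Set.mem_ofPred_eq, Polynomial.IsRoot, hdet, hu]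

/-- A functional on a finite-dimensional algebra is controlled by the regular representation, since
`x = x * 1`. -/
lemma exists_norm_le_leftMulMatrix {D : Type*} [CommRing D] [Algebra ℚ D] {d : ℕ}
    (β : Module.Basis (Fin d) ℚ D) (l : D →ₗ[ℚ] ℂ) :
    ∃ c : ℝ, 0 ≤ c ∧ ∀ x : D,
      ‖l x‖ ≤ c * ‖(algebraMap ℚ ℂ).mapMatrix (Algebra.leftMulMatrix β x)‖ := by
  set μ : Matrix (Fin d) (Fin d) ℂ →ₗ[ℂ] ℂ :=
    { toFun := fun M => ∑ i, (∑ j, M i j * (β.repr 1 j : ℚ)) * l (β i)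
      map_add' := fun M N => by simp [add_mul, Finset.sum_add_distrib]
      map_smul' := fun a M => by simp [Finset.mul_sum, Finset.sum_mul, mul_assoc] } with hμ
  obtain ⟨c, hc0, hc⟩ := SemilinearMapClass.bound_of_continuous μ
    (LinearMap.continuous_of_finiteDimensional μ)
  refine ⟨c, hc0.le, fun x => ?_⟩
  have h : μ ((algebraMap ℚ ℂ).mapMatrix (Algebra.leftMulMatrix β x)) = l x := by
    conv_rhs => rw [← β.sum_repr x, map_sum]
    simp only [hμ, LinearMap.coe_mk, AddHom.coe_mk]
    refine Finset.sum_congr rfl fun i _ => ?_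
    have h1 := congrFun (Algebra.leftMulMatrix_mulVec_repr β x 1) i
    rw [mul_one] at h1
    rw [← h1, map_smul, Matrix.mulVec, dotProduct, Rat.smul_def]
    push_cast
    rfl
  rw [← h]
  exact hc _

/-- The decay of `(d₁ⁿ (d₂ b) - d₂ (d₁ⁿ b)) / n!` in a finite-dimensional `ℚ`-algebra `D`. -/
lemma decay_functional {A B D ι : Type*} [CommRing A] [CommRing B] [Algebra ℚ B] [CommRing D]
    [Algebra ℚ D] [Module.Finite ℚ D] [Fintype ι] (φ : A →+* B) (χ : B →ₐ[ℚ] D) (l : D →ₗ[ℚ] ℂ)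
    (b : ι → A) {s : A} (hs : s ∈ Algebra.adjoin ℤ (Set.range b)) (hsu : IsUnit s)
    (hden : ∀ a, ∃ k, s ^ k * a ∈ Algebra.adjoin ℤ (Set.range b))
    (d₁ d₂ e : Derivation ℤ A A) (he : ∀ a, e a = d₁ (d₂ a) - d₂ (d₁ a))
    (hnil : ∀ i, ∃ n, d₁^[n] (b i) = 0) (hnilq : ∀ (q : ℕ) i, ∃ n, (q • d₁ + e)^[n] (b i) = 0)
    (i₀ : ι) (ρ : ℝ) (hρ : 0 < ρ) :
    ∃ C : ℝ, ∀ n : ℕ,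
      ‖l (χ ((n.factorial : ℚ)⁻¹ • φ (d₁^[n] (d₂ (b i₀)) - d₂ (d₁^[n] (b i₀)))))‖ ≤ C / ρ ^ n := by
  have hc : CompleteSpace (Matrix (Fin (Module.finrank ℚ D)) (Fin (Module.finrank ℚ D)) ℂ) :=
    FiniteDimensional.complete ℂ _
  obtain ⟨c, hc0, hc⟩ := exists_norm_le_leftMulMatrix (Module.finBasis ℚ D) l
  obtain ⟨C, hC⟩ := decay φ (((algebraMap ℚ ℂ).mapMatrix.comp
      (Algebra.leftMulMatrix (Module.finBasis ℚ D)).toRingHom).comp χ.toRingHom)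
    (finite_not_isUnit_ev _) b hs hsu hden d₁ d₂ e he hnil hnilq i₀ ρ hρ
  refine ⟨c * C, fun n => (hc _).trans ?_⟩
  rw [mul_div_assoc]
  exact mul_le_mul_of_nonneg_left (hC n) hc0

end matrix

/-! ### Eventual vanishing up to torsion, and torsion elements -/

/-- The companion endomorphism of a linear recurrence shifts its solutions. -/
lemma tupleSucc_pow {B : Type*} [CommRing B] (E : LinearRecurrence B) {x : ℕ → B}
    (hx : E.IsSolution x) (n : ℕ) :
    (E.tupleSucc ^ n) (fun i => x i) = fun i : Fin E.order => x (n + i) := by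
  induction n with
  | zero => simp
  | succ n ih =>
    rw [pow_succ', Module.End.mul_apply, ih]
    funext i
    simp only [LinearRecurrence.tupleSucc, LinearMap.coe_mk, AddHom.coe_mk]
    split_ifs with h
    · congr 1; omega
    · rw [← hx n]; congr 1; omega

lemma eventually_zero_of_recurrence {B : Type u} [CommRing B] [Algebra ℚ B]
    [Algebra.FiniteType ℚ B] (E : LinearRecurrence B) (hE : 0 < E.order) {x : ℕ → B}
    (hx : E.IsSolution x)
    (hdecay : ∀ (D : Type u) [CommRing D] [Algebra ℚ D] [Module.Finite ℚ D] (χ : B →ₐ[ℚ] D)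
      (l : D →ₗ[ℚ] ℂ) (ρ : ℝ), 0 < ρ → ∃ C : ℝ, ∀ n : ℕ, ‖l (χ (x n))‖ ≤ C / ρ ^ n) :
    ∃ N : ℕ, x N = 0 := by
  obtain ⟨N, hN⟩ := nilpotent_of_decay E.tupleSucc (fun i => x i)
    (fun D _ _ _ χ l i ρ hρ => by
      obtain ⟨C, hC⟩ := hdecay D χ l ρ hρ
      refine ⟨C / ρ ^ (i : ℕ), fun n => ?_⟩
      rw [tupleSucc_pow E hx]
      refine (hC _).trans_eq ?_
      rw [div_div, ← pow_add, add_comm])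
  rw [tupleSucc_pow E hx] at hN
  exact ⟨N, by simpa using congrFun hN ⟨0, hE⟩⟩

/-- If the convolution of `x` with a finitely supported sequence `s` with invertible constant term is
finitely supported, then `x` eventually satisfies a linear recurrence. -/
lemma exists_recurrence {B : Type*} [CommRing B] {s x h : ℕ → B} (hs0 : IsUnit (s 0)) {r K : ℕ}
    (hs : ∀ n, r < n → s n = 0) (hh : ∀ n, K ≤ n → h n = 0)
    (hc : ∀ n, ∑ j ∈ Finset.range (n + 1), s j * x (n - j) = h n) :
    ∃ E : LinearRecurrence B, 0 < E.order ∧ E.IsSolution fun n => x (n + K) := by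
  obtain ⟨w, hw⟩ := hs0
  refine ⟨⟨r + 1, fun i => -(↑w⁻¹ * s (r + 1 - i))⟩, Nat.succ_pos _, fun n => ?_⟩
  have h1 := hc (n + (r + 1) + K)
  rw [hh _ (by omega)] at h1
  have h2 : ∑ j ∈ Finset.range (n + (r + 1) + K + 1), s j * x (n + (r + 1) + K - j)
      = ∑ j ∈ Finset.range (r + 2), s j * x (n + (r + 1) + K - j) := by
    symm
    refine Finset.sum_subset (Finset.range_mono (by omega)) fun j _ hj => ?_
    rw [hs j (by rw [Finset.mem_range] at hj; omega), zero_mul]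
  rw [h2, Finset.sum_range_succ', Nat.sub_zero, ← hw] at h1
  have h3 := congrArg (fun t => (↑w⁻¹ : B) * t) (eq_neg_of_add_eq_zero_right h1)
  simp only [Units.inv_mul_cancel_left] at h3
  show x (n + (r + 1) + K) = ∑ i : Fin (r + 1), -(↑w⁻¹ * s (r + 1 - i)) * x (n + i + K)
  rw [h3, Fin.sum_univ_eq_sum_range (fun i => -(↑w⁻¹ * s (r + 1 - i)) * x (n + i + K)),
    ← Finset.sum_range_reflect, mul_neg, Finset.mul_sum, ← Finset.sum_neg_distrib]
  refine Finset.sum_congr rfl fun j hj => ?_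
  have hj' := Finset.mem_range.1 hj
  have e1 : r + 1 - 1 - j + 1 = r + 1 - j := by omega
  have e2 : n + (r + 1) + K - (r + 1 - j) = n + j + K := by omega
  rw [e1, e2]
  ring

lemma exists_natCast_smul_eq_zero {A : Type*} [CommRing A] {a : A}
    (h : (Algebra.TensorProduct.includeRight : A →ₐ[ℤ] TensorProduct ℤ ℚ A) a = 0) :
    ∃ N : ℤ, N ≠ 0 ∧ N • a = 0 := by
  have h1 : TensorProduct.mk ℤ ℚ A 1 a = 0 := h
  obtain ⟨N, hN⟩ := (IsLocalizedModule.eq_zero_iff (nonZeroDivisors ℤ) _).1 h1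
  exact ⟨N, nonZeroDivisors.coe_ne_zero N, hN⟩

/-- Some `d₁ⁿ (d₂ (b i₀))` vanishes in `ℚ ⊗ A`, that is, it is a torsion element. -/
lemma exists_torsion {A : Type u} [CommRing A] (hfg : Algebra.FiniteType ℤ A) {ι : Type*}
    [Fintype ι] (b : ι → A) {s : A} (hs : s ∈ Algebra.adjoin ℤ (Set.range b)) (hsu : IsUnit s)
    (hden : ∀ a, ∃ k, s ^ k * a ∈ Algebra.adjoin ℤ (Set.range b))
    (d₁ d₂ e : Derivation ℤ A A) (he : ∀ a, e a = d₁ (d₂ a) - d₂ (d₁ a))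
    (hnil : ∀ i, ∃ n, d₁^[n] (b i) = 0) (hnilq : ∀ (q : ℕ) i, ∃ n, (q • d₁ + e)^[n] (b i) = 0)
    (i₀ : ι) {c : A} (hcu : IsUnit c) (hc : ∃ n, d₁^[n] c = 0)
    (hcb : ∃ n, d₁^[n] (c * d₂ (b i₀)) = 0) :
    ∃ n, ∃ N : ℤ, N ≠ 0 ∧ N • d₁^[n] (d₂ (b i₀)) = 0 := by
  set φ : A →+* TensorProduct ℤ ℚ A :=
    (Algebra.TensorProduct.includeRight : A →ₐ[ℤ] TensorProduct ℤ ℚ A).toRingHom with hφ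
  obtain ⟨r, hr⟩ := hc
  obtain ⟨K₁, hK₁⟩ := hcb
  obtain ⟨K₂, hK₂⟩ := hnil i₀
  set x : ℕ → TensorProduct ℤ ℚ A := fun n =>
    (n.factorial : ℚ)⁻¹ • φ (d₁^[n] (d₂ (b i₀))) with hx
  obtain ⟨E, hE, hsol⟩ := exists_recurrence (K := max K₁ K₂) (r := r) (x := x)
    (s := fun n => PowerSeries.coeff n (expSeries φ d₁ 1 c))
    (h := fun n => PowerSeries.coeff n (expSeries φ d₁ 1 (c * d₂ (b i₀))))
    (by rw [coeff_expSeries]; simpa using hcu.map φ)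
    (fun n hn => by rw [coeff_expSeries, iterate_zero_of_le d₁ hn.le hr]; simp)
    (fun n hn => by
      rw [coeff_expSeries, iterate_zero_of_le d₁ ((le_max_left _ _).trans hn) hK₁]; simp)
    (fun n => by
      rw [map_mul, PowerSeries.coeff_mul, Finset.Nat.sum_antidiagonal_eq_sum_range_succ_mk]
      refine Finset.sum_congr rfl fun j _ => ?_
      rw [coeff_expSeries φ d₁ 1 (d₂ (b i₀)), one_pow, one_mul])
  obtain ⟨N, hN⟩ := eventually_zero_of_recurrence E hE hsol
    (fun D _ _ _ χ l ρ hρ => by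
      obtain ⟨C, hC⟩ := decay_functional φ χ l b hs hsu hden d₁ d₂ e he hnil hnilq i₀ ρ hρ
      refine ⟨C / ρ ^ (max K₁ K₂), fun n => ?_⟩
      have h1 := hC (n + max K₁ K₂)
      rw [iterate_zero_of_le d₁ ((le_max_right K₁ K₂).trans (Nat.le_add_left _ n)) hK₂, map_zero,
        sub_zero] at h1
      refine h1.trans_eq ?_
      rw [div_div, ← pow_add, add_comm])
  refine ⟨N + max K₁ K₂, exists_natCast_smul_eq_zero ?_⟩
  have hf : ((N + max K₁ K₂).factorial : ℚ)⁻¹ ≠ 0 :=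
    inv_ne_zero (by exact_mod_cast Nat.factorial_ne_zero _)
  have h3 := congrArg (fun t => (((N + max K₁ K₂).factorial : ℚ)⁻¹)⁻¹ • t) hN
  simp only [hx, smul_smul, inv_mul_cancel₀ hf, one_smul, smul_zero] at h3
  exact h3

lemma iterate_mul_eq_zero {A : Type*} [CommRing A] (d : Derivation ℤ A A) {a b : A} {m n : ℕ}
    (ha : d^[m] a = 0) (hb : d^[n] b = 0) : d^[m + n] (a * b) = 0 := by
  induction hk : m + n generalizing a b m n with
  | zero =>
    obtain rfl : m = 0 := by omega
    simp only [Function.iterate_zero, id] at ha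
    simp [ha]
  | succ k ih =>
    rcases m with _ | m
    · simp only [Function.iterate_zero, id] at ha
      rw [ha, zero_mul, iterate_map_zero]
    rcases n with _ | n
    · simp only [Function.iterate_zero, id] at hb
      rw [hb, mul_zero, iterate_map_zero]
    rw [Function.iterate_succ_apply, Derivation.leibniz, iterate_map_add, smul_eq_mul, smul_eq_mul,
      ih (m := m + 1) (n := n) ha (by rwa [Function.iterate_succ_apply] at hb) (by omega),
      mul_comm b, ih (m := m) (n := n + 1) (by rwa [Function.iterate_succ_apply] at ha) hb
        (by omega), add_zero]

lemma iterate_pow_eq_zero {A : Type*} [CommRing A] (d : Derivation ℤ A A) {a : A}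
    (ha : ∃ m, d^[m] a = 0) (k : ℕ) : ∃ m, d^[m] (a ^ k) = 0 := by
  induction k with
  | zero => exact ⟨1, by simp⟩
  | succ k ih =>
    obtain ⟨m, hm⟩ := ha
    obtain ⟨n, hn⟩ := ih
    exact ⟨n + m, by rw [pow_succ]; exact iterate_mul_eq_zero d hn hm⟩

/-- On an `N`-torsion element `t`, multiplication by `c ^ N` commutes with `d`, because
`d (c ^ N) = N c ^ (N - 1) d c`. -/
lemma nilpotent_of_torsion {A : Type*} [CommRing A] (d : Derivation ℤ A A) {t c : A} {N : ℕ}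
    (hN : N ≠ 0) (ht : N • t = 0) (hcu : IsUnit c) (hc : ∃ n, d^[n] c = 0)
    (hct : ∃ n, d^[n] (c * t) = 0) : ∃ n, d^[n] t = 0 := by
  have hcomm : ∀ k, d^[k] (c ^ N * t) = c ^ N * d^[k] t := by
    intro k
    induction k with
    | zero => rfl
    | succ k ih =>
      have hk : N • d^[k] t = 0 := by
        have := congrArg d^[k] ht
        rwa [iterate_map_nsmul, iterate_map_zero] at this
      rw [Function.iterate_succ_apply', ih, Derivation.leibniz, Derivation.leibniz_pow,
        Function.iterate_succ_apply']
      simp only [smul_eq_mul]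
      rw [mul_smul_comm, ← smul_mul_assoc, hk, zero_mul, add_zero]
  obtain ⟨n, hn⟩ := iterate_pow_eq_zero d hc (N - 1)
  obtain ⟨m, hm⟩ := hct
  refine ⟨n + m, ?_⟩
  have h1 := iterate_mul_eq_zero d hn hm
  rw [← mul_assoc, ← pow_succ, Nat.sub_add_cancel (Nat.pos_of_ne_zero hN), hcomm] at h1
  exact (hcu.pow N).mul_right_eq_zero.1 h1

/-! ### Stability of `A_L` and the adjoint action -/

lemma mem_ALset_iff {A : Type*} [CommRing A] (L : LieSubalgebra ℤ (Derivation ℤ A A)) {a : A} :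
    a ∈ ALset L ↔ ∀ d ∈ L, ∃ n, d^[n] a = 0 := by
  constructor
  · intro h d hd
    obtain ⟨n, -, hn⟩ := h d hd
    exact ⟨n, by rwa [Module.End.pow_apply] at hn⟩
  · intro h d hd
    obtain ⟨n, hn⟩ := h d hd
    refine ⟨n + 1, by omega, ?_⟩
    rw [Module.End.pow_apply]
    exact iterate_zero_of_le d (Nat.le_succ n) hn

/-- A finite family in `R`, containing a prescribed element, and a unit `s` in the subring it
generates such that every element of `A` has a multiple by a power of `s` in that subring. -/
lemma exists_generators {A : Type u} [CommRing A] (hfg : Algebra.FiniteType ℤ A) {R S : Set A}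
    (hSR : S ⊆ R) (hSu : ∀ s ∈ S, IsUnit s) (hS : ∀ a : A, ∃ s ∈ S, ∃ b ∈ R, s * a = b)
    {b₀ : A} (hb₀ : b₀ ∈ R) :
    ∃ (ι : Type u) (_ : Fintype ι) (b : ι → A) (s : A) (i₀ : ι), (∀ i, b i ∈ R) ∧ b i₀ = b₀ ∧
      IsUnit s ∧ s ∈ Algebra.adjoin ℤ (Set.range b) ∧
      ∀ a, ∃ k, s ^ k * a ∈ Algebra.adjoin ℤ (Set.range b) := by
  obtain ⟨t, ht⟩ := hfg.out
  choose σ hσ c hc hσc using hS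
  set b : Option (t ⊕ t) → A := fun o => o.elim b₀ (Sum.elim (fun a => c a) fun a => σ a) with hb
  have hbm : ∀ i, b i ∈ Algebra.adjoin ℤ (Set.range b) := fun i =>
    Algebra.subset_adjoin ⟨i, rfl⟩
  have hs : ∏ a : t, σ a ∈ Algebra.adjoin ℤ (Set.range b) :=
    prod_mem fun a _ => hbm (some (Sum.inr a))
  refine ⟨Option (t ⊕ t), inferInstance, b, ∏ a : t, σ a, none, ?_, rfl, ?_, hs, fun a => ?_⟩
  · rintro (_ | a | a)
    · exact hb₀
    · exact hc a
    · exact hSR (hσ a)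
  · exact Finset.prod_induction _ IsUnit (fun _ _ => IsUnit.mul) isUnit_one fun a _ => hSu _ (hσ a)
  · have ha : a ∈ Algebra.adjoin ℤ (t : Set A) := ht ▸ trivial
    induction ha using Algebra.adjoin_induction with
    | mem x hx =>
      refine ⟨1, ?_⟩
      classical
      rw [pow_one, ← Finset.prod_erase_mul _ _ (Finset.mem_univ (⟨x, hx⟩ : t)), mul_assoc, hσc]
      exact mul_mem (prod_mem fun a _ => hbm (some (Sum.inr a))) (hbm (some (Sum.inl ⟨x, hx⟩)))
    | algebraMap m => exact ⟨0, by rw [pow_zero, one_mul]; exact Subalgebra.algebraMap_mem _ m⟩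
    | add x y _ _ hx hy =>
      obtain ⟨k, hk⟩ := hx
      obtain ⟨l, hl⟩ := hy
      refine ⟨l + k, ?_⟩
      rw [mul_add, pow_add, mul_assoc, mul_comm (_ ^ l) (_ ^ k), mul_assoc]
      exact add_mem (mul_mem (pow_mem hs l) hk) (mul_mem (pow_mem hs k) hl)
    | mul x y _ _ hx hy =>
      obtain ⟨k, hk⟩ := hx
      obtain ⟨l, hl⟩ := hy
      refine ⟨k + l, ?_⟩
      rw [pow_add, mul_mul_mul_comm]
      exact mul_mem hk hl

/-- `A_L` is stable under `L`. -/
lemma mem_ALset_of_mem {A : Type u} [CommRing A] (hfg : Algebra.FiniteType ℤ A)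
    (L : LieSubalgebra ℤ (Derivation ℤ A A)) {S : Set A} (hSR : S ⊆ ALset L)
    (hSu : ∀ s ∈ S, IsUnit s) (hS : ∀ a : A, ∃ s ∈ S, ∃ b ∈ ALset L, s * a = b)
    {d₂ : Derivation ℤ A A} (h₂ : d₂ ∈ L) {b₀ : A} (hb₀ : b₀ ∈ ALset L) : d₂ b₀ ∈ ALset L := by
  rw [mem_ALset_iff]
  intro d₁ h₁
  obtain ⟨ι, _, b, s, i₀, hbR, rfl, hsu, hs, hden⟩ := exists_generators hfg hSR hSu hS hb₀
  have hnil : ∀ d ∈ L, ∀ i, ∃ n, d^[n] (b i) = 0 := fun d hd i =>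
    (mem_ALset_iff L).1 (hbR i) d hd
  have he : ⁅d₁, d₂⁆ ∈ L := L.lie_mem h₁ h₂
  obtain ⟨c, hcS, h, hh, hch⟩ := hS (d₂ (b i₀))
  obtain ⟨n, N, hN, hn⟩ := exists_torsion hfg b hs hsu hden d₁ d₂ ⁅d₁, d₂⁆
    (fun a => Derivation.commutator_apply a) (hnil d₁ h₁)
    (fun q => hnil _ (add_mem (nsmul_mem h₁ q) he)) i₀ (hSu c hcS)
    ((mem_ALset_iff L).1 (hSR hcS) d₁ h₁) (hch ▸ (mem_ALset_iff L).1 hh d₁ h₁)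
  obtain ⟨c', hc'S, h', hh', hch'⟩ := hS (d₁^[n] (d₂ (b i₀)))
  obtain ⟨m, hm⟩ := nilpotent_of_torsion d₁ (N := N.natAbs) (Int.natAbs_ne_zero.2 hN)
    (by
      rcases Int.natAbs_eq N with h | h
      · rw [← natCast_zsmul, ← h]; exact hn
      · rw [← natCast_zsmul, ← neg_eq_zero, ← neg_smul, ← h]; exact hn)
    (hSu c' hc'S) ((mem_ALset_iff L).1 (hSR hc'S) d₁ h₁)
    (hch' ▸ (mem_ALset_iff L).1 hh' d₁ h₁)
  exact ⟨m + n, by rwa [Function.iterate_add_apply]⟩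

lemma ad_pow_mem {A : Type*} [CommRing A] {L : LieSubalgebra ℤ (Derivation ℤ A A)}
    {d₁ d₂ : Derivation ℤ A A} (h₁ : d₁ ∈ L) (h₂ : d₂ ∈ L) (n : ℕ) :
    (LieAlgebra.ad ℤ (Derivation ℤ A A) d₁ ^ n) d₂ ∈ L := by
  induction n with
  | zero => simpa using h₂
  | succ n ih =>
    rw [pow_succ', Module.End.mul_apply, LieAlgebra.ad_apply]
    exact L.lie_mem h₁ ih

lemma ad_pow_succ_apply {A : Type*} [CommRing A] (d₁ d₂ : Derivation ℤ A A) (n : ℕ) (a : A) :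
    (LieAlgebra.ad ℤ (Derivation ℤ A A) d₁ ^ (n + 1)) d₂ a =
      d₁ ((LieAlgebra.ad ℤ (Derivation ℤ A A) d₁ ^ n) d₂ a) -
        (LieAlgebra.ad ℤ (Derivation ℤ A A) d₁ ^ n) d₂ (d₁ a) := by
  rw [pow_succ', Module.End.mul_apply, LieAlgebra.ad_apply, Derivation.commutator_apply]

/-- If `R` is stable under `d₁` and `d₁` is nilpotent on `((ad d₁)ⁿ d₂) b` for all `b ∈ R`, then
`(ad d₁)ⁿ d₂` vanishes on `b` for `n` large. Once `(ad d₁)ⁿ d₂` vanishes on `d₁ b` for `n ≥ N`, it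
acts on `b` for these `n` as `d₁ ^ (n - N)` applied to a fixed element. -/
lemma exists_ad_pow_apply {A : Type*} [CommRing A] {R : Set A} (d₁ d₂ : Derivation ℤ A A)
    (hR₁ : ∀ b ∈ R, d₁ b ∈ R) (hR₂ : ∀ n, ∀ b ∈ R, ∃ m,
      d₁^[m] ((LieAlgebra.ad ℤ (Derivation ℤ A A) d₁ ^ n) d₂ b) = 0) (k : ℕ) :
    ∀ b ∈ R, d₁^[k] b = 0 →
      ∃ N, ∀ n ≥ N, (LieAlgebra.ad ℤ (Derivation ℤ A A) d₁ ^ n) d₂ b = 0 := by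
  induction k with
  | zero =>
    intro b _ h
    simp only [Function.iterate_zero, id] at h
    exact ⟨0, fun n _ => by rw [h, map_zero]⟩
  | succ k ih =>
    intro b hb h
    obtain ⟨N, hN⟩ := ih (d₁ b) (hR₁ b hb) (by rwa [Function.iterate_succ_apply] at h)
    have hit : ∀ j, (LieAlgebra.ad ℤ (Derivation ℤ A A) d₁ ^ (N + j)) d₂ b
        = d₁^[j] ((LieAlgebra.ad ℤ (Derivation ℤ A A) d₁ ^ N) d₂ b) := by
      intro j
      induction j with
      | zero => rfl
      | succ j ihj =>
        rw [← add_assoc, ad_pow_succ_apply, hN _ (Nat.le_add_right _ _), sub_zero, ihj,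
          Function.iterate_succ_apply']
    obtain ⟨m, hm⟩ := hR₂ N b hb
    refine ⟨N + m, fun n hn => ?_⟩
    obtain ⟨j, rfl⟩ := Nat.exists_eq_add_of_le hn
    rw [add_assoc, hit]
    exact iterate_zero_of_le d₁ (Nat.le_add_right _ _) hm

/-- Lemma 5: Let `A` be a finitely generated commutative ring and `L ⊆ Der(A)` a Lie
subring such that `A_L` is an order in `A`.  Then `L` is weakly Engel. -/
theorem stmt_11 (A : Type*) [CommRing A] (hfg : Algebra.FiniteType ℤ A)
    (L : LieSubalgebra ℤ (Derivation ℤ A A))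
    (horder : ∃ S : Set A, S ⊆ ALset L ∧ (∀ s ∈ S, ∀ t ∈ S, s * t ∈ S) ∧
      (∀ s ∈ S, IsUnit s) ∧ ∀ a : A, ∃ s ∈ S, ∃ b ∈ ALset L, s * a = b)
    (d₁ d₂ : Derivation ℤ A A) (h₁ : d₁ ∈ L) (h₂ : d₂ ∈ L) :
    ∃ n : ℕ, 1 ≤ n ∧ (LieAlgebra.ad ℤ (Derivation ℤ A A) d₁ ^ n) d₂ = 0 := by
  obtain ⟨S, hSR, -, hSu, hS⟩ := horder
  have hstab : ∀ d ∈ L, ∀ b ∈ ALset L, d b ∈ ALset L := fun d hd b hb =>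
    mem_ALset_of_mem hfg L hSR hSu hS hd hb
  have h0 : (0 : A) ∈ ALset L := (mem_ALset_iff L).2 fun d _ => ⟨0, rfl⟩
  obtain ⟨ι, _, b, s, -, hbR, -, hsu, hs, hden⟩ := exists_generators hfg hSR hSu hS h0
  have hkill : ∀ i, ∃ N, ∀ n ≥ N, (LieAlgebra.ad ℤ (Derivation ℤ A A) d₁ ^ n) d₂ (b i) = 0 := by
    intro i
    obtain ⟨k, hk⟩ := (mem_ALset_iff L).1 (hbR i) d₁ h₁
    exact exists_ad_pow_apply d₁ d₂ (hstab d₁ h₁)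
      (fun n b hb => (mem_ALset_iff L).1 (hstab _ (ad_pow_mem h₁ h₂ n) b hb) d₁ h₁) k _ (hbR i) hk
  choose N hN using hkill
  refine ⟨∑ i, N i + 1, Nat.le_add_left _ _, ?_⟩
  set D := (LieAlgebra.ad ℤ (Derivation ℤ A A) d₁ ^ (∑ i, N i + 1)) d₂ with hD
  have hadj : ∀ a ∈ Algebra.adjoin ℤ (Set.range b), D a = 0 := by
    refine Derivation.eqOn_adjoin (D2 := 0) ?_
    rintro _ ⟨i, rfl⟩
    exact hN i _ ((Finset.single_le_sum (fun _ _ => Nat.zero_le _) (Finset.mem_univ i)).trans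
      (Nat.le_succ _))
  ext a
  obtain ⟨k, hk⟩ := hden a
  have h3 := hadj _ hk
  rw [Derivation.leibniz, hadj _ (pow_mem hs k), smul_zero, add_zero, smul_eq_mul] at h3
  exact (hsu.pow k).mul_right_eq_zero.1 h3
end
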